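/- Let G be a 2-connected subgraph of Q_n and let a, b be distinct vertices of G such that every vertex z of G other than a and b has degree at least d in G. Then G contains a path from a to b of length at least 2^d - 2. -/

import Mathlib

def hypercube (n : ℕ) : SimpleGraph (Fin n → Bool) :=
  SimpleGraph.fromRel (fun x y => hammingDist x y = 1)

/-- A graph is 2-connected if it has at least 3 vertices and remains connected after
deleting any single vertex. -/
def TwoConnected {V : Type*} (H : SimpleGraph V) : Prop :=
  (∃ x y z : V, x ≠ y ∧ x ≠ z ∧ y ≠ z) ∧
  ∀ v : V, ((⊤ : H.Subgraph).deleteVerts {v}).coe.Connected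

set_option linter.unusedSectionVars false
set_option linter.unusedVariables false
namespace HC
variable {V : Type*} [DecidableEq V] {G : SimpleGraph V}

def Reach (G : SimpleGraph V) (S : Finset V) (x y : V) : Prop :=
  x ∈ S ∧ Relation.ReflTransGen (fun u v => G.Adj u v ∧ v ∈ S) x y

theorem Reach.refl {S : Finset V} {x : V} (h : x ∈ S) : Reach G S x x := ⟨h, .refl⟩

theorem Reach.tail {S : Finset V} {x y w : V} (h : Reach G S x y) (ha : G.Adj y w) (hw : w ∈ S) :
    Reach G S x w := ⟨h.1, h.2.tail ⟨ha, hw⟩⟩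

theorem Reach.left {S : Finset V} {x y : V} (h : Reach G S x y) : x ∈ S := h.1

theorem Reach.right {S : Finset V} {x y : V} (h : Reach G S x y) : y ∈ S := by
  obtain ⟨h1, h2⟩ := h
  cases h2 with
  | refl => exact h1
  | tail _ h => exact h.2

theorem Reach.trans {S : Finset V} {x y w : V} (h : Reach G S x y) (h' : Reach G S y w) :
    Reach G S x w := ⟨h.1, h.2.trans h'.2⟩

theorem Reach.closed {S : Finset V} {x y : V} (h : Reach G S x y) (Y : V → Prop)
    (hY : ∀ u, Y u → u ∈ S → ∀ v ∈ S, G.Adj u v → Y v) (hx : Y x) : Y y := by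
  obtain ⟨h1, h2⟩ := h
  have : Y y ∧ y ∈ S := by
    induction h2 with
    | refl => exact ⟨hx, h1⟩
    | tail _ h ih => exact ⟨hY _ ih.1 ih.2 _ h.2 h.1, h.2⟩
  exact this.1

theorem Reach.symm {S : Finset V} {x y : V} (h : Reach G S x y) : Reach G S y x := by
  have hx := h.1
  refine h.closed (fun y => Reach G S y x) ?_ (.refl hx)
  intro u hu huS v hv ha
  exact ((Reach.refl hv).tail ha.symm huS).trans hu

theorem Reach.mono {S T : Finset V} {x y : V} (h : Reach G S x y) (hst : S ⊆ T) :
    Reach G T x y := by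
  refine h.closed (fun y => Reach G T x y) ?_ (.refl (hst h.1))
  intro u hu _ v hv ha
  exact hu.tail ha (hst hv)

theorem Reach.exit {S : Finset V} {x y : V} (h : Reach G S x y) (X : Finset V) (hx : x ∈ X)
    (hy : y ∉ X) : ∃ u v, u ∈ S ∧ u ∈ X ∧ Reach G (S ∩ X) x u ∧ G.Adj u v ∧ v ∈ S ∧ v ∉ X := by
  by_contra hc
  push Not at hc
  have := h.closed (fun w => w ∈ X ∧ Reach G (S ∩ X) x w) (by
    rintro u ⟨hu, hr⟩ huS v hv ha
    have := hc u v huS hu hr ha hv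
    exact ⟨this, hr.tail ha (by simp [*])⟩) ⟨hx, .refl (by simp [h.1, hx])⟩
  exact hy this.1

def Conn (G : SimpleGraph V) (S : Finset V) : Prop := ∀ x ∈ S, ∀ y ∈ S, Reach G S x y
def TC (G : SimpleGraph V) (S : Finset V) : Prop := ∀ v, Conn G (S.erase v)

theorem conn_of_root {S : Finset V} {r : V} (h : ∀ x ∈ S, Reach G S x r) : Conn G S :=
  fun x hx y hy => (h x hx).trans (h y hy).symm

open Classical in
noncomputable def dg (G : SimpleGraph V) (S : Finset V) (v : V) : ℕ := (S.filter (G.Adj v)).card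

theorem dg_le {S T : Finset V} {v : V} (h : ∀ w ∈ T, G.Adj v w → w ∈ S) : dg G T v ≤ dg G S v := by
  classical
  apply Finset.card_le_card
  intro w
  simp only [Finset.mem_filter]
  grind

theorem dg_le1 {S T : Finset V} {v : V}
    (h : ∀ w ∈ T, ∀ w' ∈ T, G.Adj v w → G.Adj v w' → w ∉ S → w' ∉ S → w = w') :
    dg G T v ≤ dg G S v + 1 := by
  classical
  have h1 : (T.filter (fun w => G.Adj v w ∧ w ∉ S)).card ≤ 1 := by
    rw [Finset.card_le_one]
    grind
  calc dg G T v ≤ (S.filter (G.Adj v) ∪ T.filter (fun w => G.Adj v w ∧ w ∉ S)).card := by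
        apply Finset.card_le_card
        intro w
        simp only [Finset.mem_filter, Finset.mem_union]
        grind
    _ ≤ _ := Finset.card_union_le _ _
    _ ≤ _ := by unfold dg; gcongr

theorem dg_pos {S : Finset V} {v : V} (h : 1 ≤ dg G S v) : ∃ w ∈ S, G.Adj v w := by
  classical
  obtain ⟨w, hw⟩ := Finset.card_pos.1 h
  exact ⟨w, by simpa using hw⟩

theorem dg_two {S : Finset V} {v : V} (h : 2 ≤ dg G S v) :
    ∃ w ∈ S, ∃ w' ∈ S, w ≠ w' ∧ G.Adj v w ∧ G.Adj v w' := by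
  classical
  obtain ⟨w, hw, w', hw', hne⟩ := Finset.one_lt_card.1 h
  simp only [Finset.mem_filter] at hw hw'
  exact ⟨w, hw.1, w', hw'.1, hne, hw.2, hw'.2⟩

theorem two_le_dg {S : Finset V} {v w w' : V} (h : w ∈ S) (h' : w' ∈ S) (hne : w ≠ w')
    (ha : G.Adj v w) (ha' : G.Adj v w') : 2 ≤ dg G S v := by
  classical
  exact Finset.one_lt_card.2 ⟨w, by simp [*], w', by simp [*], hne⟩

/-! paths -/
def IsP (G : SimpleGraph V) (l : List V) (a b : V) : Prop :=
  l.IsChain G.Adj ∧ l.Nodup ∧ l.head? = some a ∧ l.getLast? = some b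

def LP (G : SimpleGraph V) (S : Finset V) (k : ℕ) (a b : V) : Prop :=
  ∃ l, IsP G l a b ∧ (∀ v ∈ l, v ∈ S) ∧ k + 1 ≤ l.length

theorem IsP.left {l1 l2 : List V} {a b v : V} (h : IsP G (l1 ++ v :: l2) a b) :
    IsP G (l1 ++ [v]) a v := by
  obtain ⟨h1, h2, h3, h4⟩ := h
  refine ⟨?_, ?_, ?_, by simp⟩
  · rw [List.isChain_append] at h1 ⊢
    refine ⟨h1.1, by simp, ?_⟩
    intro x hx y hy
    exact h1.2.2 x hx y (by simpa using hy)
  · simp only [List.nodup_append, List.nodup_cons] at h2 ⊢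
    grind
  · cases l1 <;> simpa using h3

theorem IsP.right {l1 l2 : List V} {a b v : V} (h : IsP G (l1 ++ v :: l2) a b) :
    IsP G (v :: l2) v b := by
  obtain ⟨h1, h2, h3, h4⟩ := h
  refine ⟨(List.isChain_append.1 h1).2.1, (List.nodup_append.1 h2).2.1, by simp, ?_⟩
  rw [← h4, List.getLast?_append]
  simp [List.getLast?_cons]

theorem IsP.append {l1 l2 : List V} {a b x y : V} (h : IsP G l1 a x) (hxy : G.Adj x y)
    (h' : IsP G l2 y b) (hd : ∀ v ∈ l1, v ∉ l2) : IsP G (l1 ++ l2) a b := by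
  obtain ⟨h1, h2, h3, h4⟩ := h
  obtain ⟨h1', h2', h3', h4'⟩ := h'
  refine ⟨?_, ?_, ?_, ?_⟩
  · rw [List.isChain_append]
    refine ⟨h1, h1', ?_⟩
    intro p hp q hq
    simp_all
  · rw [List.nodup_append]
    exact ⟨h2, h2', fun p hp q hq hpq => hd p hp (hpq ▸ hq)⟩
  · simp [List.head?_append, h3]
  · simp [List.getLast?_append, h4']

theorem IsP.symm {l : List V} {a b : V} (h : IsP G l a b) : IsP G l.reverse b a := by
  obtain ⟨h1, h2, h3, h4⟩ := h
  refine ⟨?_, by simpa using h2, by simpa using h4, by simpa using h3⟩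
  rw [List.isChain_reverse]
  exact h1.imp (fun a b h => h.symm)

theorem IsP.single (a : V) : IsP G [a] a a := by simp [IsP]

theorem IsP.mem_left {l : List V} {a b : V} (h : IsP G l a b) : a ∈ l :=
  List.mem_of_mem_head? h.2.2.1
theorem IsP.mem_right {l : List V} {a b : V} (h : IsP G l a b) : b ∈ l :=
  List.mem_of_mem_getLast? h.2.2.2

theorem IsP.LP {l : List V} {a b : V} (h : IsP G l a b) {S : Finset V} (hS : ∀ v ∈ l, v ∈ S) :
    LP G S 0 a b := ⟨l, h, hS, by have := List.length_pos_of_mem h.mem_left; omega⟩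

theorem LP.mono {S T : Finset V} {k m : ℕ} {a b : V} (h : LP G S k a b) (hst : S ⊆ T)
    (hk : m ≤ k) : LP G T m a b := by
  obtain ⟨l, h1, h2, h3⟩ := h
  exact ⟨l, h1, fun v hv => hst (h2 v hv), by omega⟩

theorem LP.symm {S : Finset V} {k : ℕ} {a b : V} (h : LP G S k a b) : LP G S k b a := by
  obtain ⟨l, h1, h2, h3⟩ := h
  exact ⟨l.reverse, h1.symm, by simpa using h2, by simpa using h3⟩

theorem LP.join {S T : Finset V} {k m : ℕ} {a b x y : V} (h : LP G S k a x) (hxy : G.Adj x y)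
    (h' : LP G T m y b) (hd : Disjoint S T) : LP G (S ∪ T) (k + m + 1) a b := by
  obtain ⟨l, h1, h2, h3⟩ := h
  obtain ⟨l', h1', h2', h3'⟩ := h'
  refine ⟨l ++ l', h1.append hxy h1' ?_, ?_, ?_⟩
  · intro v hv hv'
    exact Finset.disjoint_left.1 hd (h2 v hv) (h2' v hv')
  · simp only [List.mem_append, Finset.mem_union]
    grind
  · simp; omega

theorem LP.glue {S T : Finset V} {k m : ℕ} {a b u : V} (h : LP G S k a u)
    (h' : LP G T m u b) (hd : ∀ v ∈ S, v ∈ T → v = u) : LP G (S ∪ T) (k + m) a b := by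
  obtain ⟨l', h1', h2', h3'⟩ := h'
  match l', h1' with
  | [], h => simp [IsP] at h
  | [x], h1' =>
    obtain ⟨_, _, h5, h6⟩ := h1'
    simp at h5 h6 h3'
    subst h5 h6
    exact h.mono Finset.subset_union_left (by omega)
  | x :: y :: t, h1' =>
    obtain ⟨h3, h4, h5, h6⟩ := h1'
    simp at h5
    subst h5
    have hxy : G.Adj x y := by simp at h3; exact h3.1
    have h2 : LP G (T.erase x) (m - 1) y b := by
      refine ⟨y :: t, ⟨by simp at h3; exact h3.2, (List.nodup_cons.1 h4).2, by simp, by simpa using h6⟩, ?_, ?_⟩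
      · intro v hv
        refine Finset.mem_erase.2 ⟨?_, h2' v (List.mem_cons_of_mem _ hv)⟩
        rintro rfl
        exact (List.nodup_cons.1 h4).1 hv
      · simp at h3' ⊢; omega
    refine (h.join hxy h2 ?_).mono ?_ (by omega)
    · rw [Finset.disjoint_left]
      intro v hv hv'
      simp at hv'
      exact hv'.1 (hd v hv hv'.2)
    · exact Finset.union_subset_union_right (Finset.erase_subset _ _)

theorem LP.refl {S : Finset V} {a : V} (h : a ∈ S) : LP G S 0 a a :=
  (IsP.single a).LP (by simpa using h)

theorem Reach.LP {S : Finset V} {a b : V} (h : Reach G S a b) : LP G S 0 a b := by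
  refine h.closed (fun b => HC.LP G S 0 a b) ?_ (LP.refl h.1)
  rintro u ⟨l, h1, h2, h3⟩ huS v hv ha
  by_cases hvl : v ∈ l
  · obtain ⟨l1, l2, rfl⟩ := List.append_of_mem hvl
    exact h1.left.LP (by intro w hw; apply h2; simp at hw ⊢; tauto)
  · exact (h1.append ha (IsP.single v) (by grind)).LP (by simp; grind)

theorem LP.one {S : Finset V} {k : ℕ} {a b : V} (h : LP G S k a b) (hab : a ≠ b) :
    LP G S (max k 1) a b := by
  obtain ⟨l, h1, h2, h3⟩ := h
  refine ⟨l, h1, h2, ?_⟩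
  match l, h1 with
  | [], h => simp [IsP] at h
  | [x], h1 => simp [IsP] at h1; exact absurd (h1.1.symm.trans h1.2) hab
  | x :: y :: t, h1 => simp at h3 ⊢; omega

theorem LP.adj {S : Finset V} {a b : V} (h : LP G S 0 a b) (hS : S ⊆ {a, b}) (hab : a ≠ b) :
    G.Adj a b := by
  obtain ⟨l, h1, h2, h3⟩ := h
  match l, h1 with
  | [], h => simp [IsP] at h
  | [x], h1 => simp [IsP] at h1; exact absurd (h1.1.symm.trans h1.2) hab
  | x :: y :: t, h1 =>
    obtain ⟨h3, h4, h5, h6⟩ := h1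
    simp at h5 h3
    subst h5
    have := hS (h2 y (by simp))
    simp at this h4
    rcases this with rfl | rfl
    · simp at h4
    · exact h3.1

theorem IsP.parity {c : V → Bool} (hc : ∀ u v, G.Adj u v → c u ≠ c v) {l : List V} {a b : V}
    (h : IsP G l a b) : (c a = c b ↔ l.length % 2 = 1) := by
  induction l generalizing a with
  | nil => simp [IsP] at h
  | cons x t ih =>
    cases t with
    | nil => simp [IsP] at h; simp [← h.1, ← h.2]
    | cons y t =>
      obtain ⟨h3, h4, h5, h6⟩ := h
      simp at h5 h3
      subst h5
      have h8 := @ih y ⟨h3.2, (List.nodup_cons.1 h4).2, by simp, by simpa using h6⟩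
      have h7 := hc _ _ h3.1
      have h9 : (c x = c b) ↔ ¬ (c y = c b) := by
        cases h1 : c x <;> cases h2 : c y <;> cases h3 : c b <;> simp_all
      rw [h9, h8]
      simp only [List.length_cons]
      omega

theorem LP.par_even {c : V → Bool} (hc : ∀ u v, G.Adj u v → c u ≠ c v) {S : Finset V} {k : ℕ}
    {a b : V} (h : LP G S k a b) (hab : c a = c b) (hk : k % 2 = 1) : LP G S (k + 1) a b := by
  obtain ⟨l, h1, h2, h3⟩ := h
  have := (h1.parity hc).1 hab
  exact ⟨l, h1, h2, by omega⟩

theorem LP.par_odd {c : V → Bool} (hc : ∀ u v, G.Adj u v → c u ≠ c v) {S : Finset V} {k : ℕ}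
    {a b : V} (h : LP G S k a b) (hab : c a ≠ c b) (hk : k % 2 = 0) : LP G S (k + 1) a b := by
  obtain ⟨l, h1, h2, h3⟩ := h
  have := (not_congr (h1.parity hc)).1 hab
  exact ⟨l, h1, h2, by omega⟩

end HC
set_option linter.unusedSectionVars false
set_option linter.unusedVariables false
namespace HC
variable {V : Type*} [DecidableEq V] {G : SimpleGraph V}

structure Sep (G : SimpleGraph V) (B W : Finset V) (u r : V) : Prop where
  ne : W.Nonempty
  sub : W ⊆ B
  rW : r ∉ W
  uB : u ∈ B
  uW : u ∉ W
  cl : ∀ w ∈ W, ∀ v ∈ B, G.Adj w v → v ∈ W ∨ v = u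

def Leaf (G : SimpleGraph V) (B W : Finset V) (u r : V) : Prop :=
  Sep G B W u r ∧ ∀ W' u', W' ⊂ W → ¬ Sep G B W' u' r

open Classical in
noncomputable def comp (G : SimpleGraph V) (S : Finset V) (v : V) : Finset V :=
  S.filter (fun w => Reach G S v w)

theorem mem_comp {S : Finset V} {v w : V} : w ∈ comp G S v ↔ Reach G S v w := by
  classical
  simp only [comp, Finset.mem_filter]
  exact ⟨fun h => h.2, fun h => ⟨h.right, h⟩⟩

theorem comp_conn {S : Finset V} {v : V} : Conn G (comp G S v) := by
  apply conn_of_root (r := v)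
  intro x hx
  rw [mem_comp] at hx
  have : Reach G (comp G S v) v x := by
    refine hx.closed (fun x => Reach G (comp G S v) v x) ?_ (.refl (mem_comp.2 (.refl hx.left)))
    intro u hu huS w hw ha
    refine hu.tail ha ?_
    have := mem_comp.1 hu.right
    exact mem_comp.2 (this.tail ha hw)
  exact this.symm

theorem comp_sep {B : Finset V} {s v r : V} (hs : s ∈ B) (hv : v ∈ B.erase s)
    (hr : ¬ Reach G (B.erase s) v r) : Sep G B (comp G (B.erase s) v) s r := by
  refine ⟨⟨v, mem_comp.2 (.refl hv)⟩, ?_, fun h => hr (mem_comp.1 h), hs, ?_, ?_⟩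
  · intro w hw
    exact Finset.mem_of_mem_erase (mem_comp.1 hw).right
  · intro h
    have := (mem_comp.1 h).right
    simp at this
  · intro w hw x hx ha
    by_cases h : x = s
    · exact .inr h
    · exact .inl (mem_comp.2 ((mem_comp.1 hw).tail ha (by simp [h, hx])))

theorem Sep.leaf {B X : Finset V} {u r : V} (h : Sep G B X u r) :
    ∃ W u', W ⊆ X ∧ Leaf G B W u' r := by
  induction hn : X.card using Nat.strong_induction_on generalizing X u with
  | _ n ih =>
    by_cases hl : ∃ W' u', W' ⊂ X ∧ Sep G B W' u' r
    · obtain ⟨W', u', hs, hS⟩ := hl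
      obtain ⟨W, u'', h1, h2⟩ := ih _ (hn ▸ Finset.card_lt_card hs) hS rfl
      exact ⟨W, u'', h1.trans hs.1, h2⟩
    · push Not at hl
      exact ⟨X, u, subset_rfl, h, hl⟩

theorem Sep.adj {B X : Finset V} {u r : V} (h : Sep G B X u r) (hB : Conn G B) (hr : r ∈ B) :
    ∃ w ∈ X, G.Adj w u := by
  obtain ⟨x, hx⟩ := h.ne
  obtain ⟨p, q, h1, h2, h3, h4, h5, h6⟩ := (hB x (h.sub hx) r hr).exit X hx h.rW
  rcases h.cl p h2 q h5 h4 with h7 | rfl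
  · exact absurd h7 h6
  · exact ⟨p, h2, h4⟩

theorem Sep.toU {B X : Finset V} {u r : V} (h : Sep G B X u r) (hB : Conn G B) {x : V}
    (hx : x ∈ B) (hxX : x ∉ X) : Reach G (B \ X) x u := by
  obtain ⟨y, hy⟩ := h.ne
  obtain ⟨p, q, h1, h2, h3, h4, h5, h6⟩ :=
    (hB x hx y (h.sub hy)).exit (B \ X) (by simp [*]) (by simp [*])
  simp [h5] at h6
  simp at h2
  rcases h.cl q h6 p h1 h4.symm with h7 | rfl
  · exact absurd h7 h2.2
  · exact h3.mono Finset.inter_subset_right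

theorem Sep.conn {B X : Finset V} {u r : V} (h : Sep G B X u r) (hB : Conn G B) :
    Conn G (B \ X) :=
  conn_of_root (r := u) fun x hx => by
    simp at hx
    exact h.toU hB hx.1 hx.2

theorem Sep.inside {B X : Finset V} {u r : V} (h : Sep G B X u r) (hB : Conn G B) {x : V}
    (hx : x ∈ X) : Reach G (insert u X) x u := by
  obtain ⟨p, q, h1, h2, h3, h4, h5, h6⟩ := (hB x (h.sub hx) u h.uB).exit X hx h.uW
  rcases h.cl p h2 q h5 h4 with h7 | rfl
  · exact absurd h7 h6
  · exact (h3.mono (by intro y hy; simp at hy ⊢; tauto)).tail h4 (by simp)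

theorem sep_erase {B : Finset V} {r y : V} (hr : r ∈ B) (hy : y ∈ B) (hne : y ≠ r) :
    Sep G B (B.erase r) r r := by
  refine ⟨⟨y, by simp [*]⟩, Finset.erase_subset _ _, by simp, hr, by simp, ?_⟩
  intro w hw v hv _
  simp [hv]
  tauto

theorem Leaf.conn {B W : Finset V} {u r : V} (h : Leaf G B W u r) : Conn G W := by
  intro x hx y hy
  by_contra hc
  have hsub : comp G W x ⊂ W := by
    refine Finset.ssubset_iff_subset_ne.2 ⟨fun z hz => (mem_comp.1 hz).right, ?_⟩
    intro he
    rw [← he, mem_comp] at hy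
    exact hc hy
  refine h.2 _ u hsub ⟨⟨x, mem_comp.2 (.refl hx)⟩, hsub.1.trans h.1.sub, fun h' => h.1.rW (hsub.1 h'),
    h.1.uB, fun h' => h.1.uW (hsub.1 h'), ?_⟩
  intro w hw v hv ha
  rcases h.1.cl w (hsub.1 hw) v hv ha with h1 | h1
  · exact .inl (mem_comp.2 ((mem_comp.1 hw).tail ha h1))
  · exact .inr h1

theorem Leaf.tc {B W : Finset V} {u r : V} (h : Leaf G B W u r) (hB : Conn G B) (hr : r ∈ B) :
    TC G (insert u W) := by
  intro s
  by_cases hsu : s = u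
  · subst hsu
    rw [Finset.erase_insert h.1.uW]
    exact h.conn
  apply conn_of_root (r := u)
  intro v hv
  by_cases hvu : v = u
  · subst hvu; exact .refl hv
  by_contra hc
  have hsub : comp G ((insert u W).erase s) v ⊆ W := by
    intro z hz
    have := (mem_comp.1 hz).right
    simp at this
    rcases this.2 with rfl | h
    · exact absurd (mem_comp.1 hz) hc
    · exact h
  have hcl : ∀ w ∈ comp G ((insert u W).erase s) v, ∀ x ∈ B, G.Adj w x →
      x ∈ comp G ((insert u W).erase s) v ∨ x = s := by
    intro w hw x hx ha
    by_cases hxs : x = s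
    · exact .inr hxs
    refine .inl (mem_comp.2 ((mem_comp.1 hw).tail ha ?_))
    rcases h.1.cl w (hsub hw) x hx ha with h1 | h1 <;> simp [h1, hxs]
    exact fun h => hxs (h1.trans h)
  by_cases hs : s ∈ W
  · refine h.2 (comp G ((insert u W).erase s) v) s ?_ ⟨⟨v, mem_comp.2 (.refl hv)⟩,
      hsub.trans h.1.sub, fun h' => h.1.rW (hsub h'), h.1.sub hs, ?_, hcl⟩
    · refine Finset.ssubset_iff_subset_ne.2 ⟨hsub, fun he => ?_⟩
      rw [← he] at hs
      have := (mem_comp.1 hs).right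
      simp at this
    · intro hs
      have := (mem_comp.1 hs).right
      simp at this
  · have : (insert u W).erase s = insert u W := by
      apply Finset.erase_eq_of_notMem
      simp [hs, hsu]
    rw [this] at hc hv
    simp [hvu] at hv
    exact hc (h.1.inside hB hv)

theorem Sep.out {B X : Finset V} {u r : V} (h : Sep G B X u r) {x y : V}
    (hr : Reach G (B.erase u) x y) (hx : x ∉ X) : Reach G (B \ insert u X) x y := by
  have hxm := hr.left
  simp at hxm
  refine hr.closed (fun y => Reach G (B \ insert u X) x y) ?_ (.refl (by simp; tauto))
  intro p hp hpS v hv ha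
  refine hp.tail ha ?_
  have := hp.right
  simp at this hv ⊢
  refine ⟨hv.2, hv.1, fun hvX => ?_⟩
  have := h.cl v hvX p this.1 ha.symm
  tauto

theorem leafL_aux {B : Finset V} (hB : Conn G B) {b y1 y2 : V} (hb : b ∈ B) (hy1 : y1 ∈ B)
    (hy2 : y2 ∈ B) (hne : y1 ≠ y2) {X : Finset V} {u : V} (hX : Sep G B X u b) (hyX : y1 ∈ X)
    (hmin : ∀ X' u', Sep G B X' u' b → (y1 ∈ X' ∨ y2 ∈ X') → X.card ≤ X'.card) :
    ∃ W v, Leaf G B W v b ∧ ((y1 ∈ W ∨ y2 ∈ W) ∨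
      ∃ y, (y = y1 ∨ y = y2) ∧ Reach G (B \ insert v W) y b) := by
  obtain ⟨W, v, hWX, hL⟩ := hX.leaf
  refine ⟨W, v, hL, ?_⟩
  by_cases h1 : y1 ∈ W
  · exact .inl (.inl h1)
  by_cases h2 : y2 ∈ W
  · exact .inl (.inr h2)
  right
  have hvX : v ∈ X := by
    obtain ⟨w, hw, ha⟩ := hL.1.adj hB hb
    rcases hX.cl w (hWX hw) v hL.1.uB ha with h | rfl
    · exact h
    exfalso
    have hS : Sep G B (X \ W) v b := by
      refine ⟨⟨y1, by simp [*]⟩, Finset.sdiff_subset.trans hX.sub, ?_, hX.uB, ?_, ?_⟩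
      · simp [hX.rW]
      · simp [hX.uW]
      · intro p hp q hq ha
        simp at hp ⊢
        rcases hX.cl p hp.1 q hq ha with h | h
        · by_cases hqW : q ∈ W
          · rcases hL.1.cl q hqW p (hX.sub hp.1) ha.symm with h | h
            · tauto
            · exact absurd hp.1 (h ▸ hX.uW)
          · tauto
        · tauto
    have := hmin _ _ hS (.inl (by simp [*]))
    have h3 := Finset.card_lt_card (Finset.sdiff_ssubset hWX hL.1.ne)
    omega
  obtain ⟨y, hy, hyv, hyB⟩ : ∃ y, (y = y1 ∨ y = y2) ∧ y ≠ v ∧ y ∈ B := by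
    by_cases h : y1 = v
    · exact ⟨y2, .inr rfl, fun h' => hne (h.trans h'.symm), hy2⟩
    · exact ⟨y1, .inl rfl, h, hy1⟩
  refine ⟨y, hy, ?_⟩
  have hyW : y ∉ W := by rcases hy with rfl | rfl <;> assumption
  by_cases hr : Reach G (B.erase v) y b
  · exact hL.1.out hr hyW
  exfalso
  have hsub : B \ X ⊆ B.erase v := by
    intro z hz
    simp at hz ⊢
    exact ⟨fun h => hz.2 (h ▸ hvX), hz.1⟩
  by_cases hyX' : y ∈ X
  · have hS := comp_sep hL.1.uB (by simp [*]) hr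
    have hm := hmin _ _ hS (by
      have : y ∈ comp G (B.erase v) y := mem_comp.2 (.refl (by simp [*]))
      rcases hy with rfl | rfl
      · exact .inl this
      · exact .inr this)
    have : comp G (B.erase v) y ⊂ X := by
      refine Finset.ssubset_iff_subset_ne.2 ⟨?_, ?_⟩
      · intro z hz
        refine (mem_comp.1 hz |>.closed (fun z => z ∈ X ∧ Reach G (B.erase v) y z) ?_
          ⟨hyX', .refl (by simp [*])⟩).1
        rintro p ⟨hp, hpr⟩ hpS q hq ha
        refine ⟨?_, hpr.tail ha hq⟩
        rcases hX.cl p hp q (Finset.mem_of_mem_erase hq) ha with h | rfl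
        · exact h
        exfalso
        exact hr ((hpr.tail ha hq).trans ((hX.toU hB hb hX.rW).symm.mono hsub))
      · intro he
        rw [← he] at hvX
        have := (mem_comp.1 hvX).right
        simp at this
    have := Finset.card_lt_card this
    omega
  · exact hr ((hX.conn hB y (by simp [*]) b (by simp [hb, hX.rW])).mono hsub)

theorem leafL {B : Finset V} (hB : Conn G B) {b y1 y2 : V} (hb : b ∈ B) (hy1 : y1 ∈ B)
    (hy2 : y2 ∈ B) (hne : y1 ≠ y2) :
    ∃ W v, Leaf G B W v b ∧ ((y1 ∈ W ∨ y2 ∈ W) ∨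
      ∃ y, (y = y1 ∨ y = y2) ∧ Reach G (B \ insert v W) y b) := by
  classical
  have hex : ∃ k X u, Sep G B X u b ∧ (y1 ∈ X ∨ y2 ∈ X) ∧ X.card = k := by
    by_cases h : y1 = b
    · have h2 : y2 ≠ b := fun h' => hne (h.trans h'.symm)
      exact ⟨_, _, _, sep_erase hb hy2 h2, .inr (by simp [*]), rfl⟩
    · exact ⟨_, _, _, sep_erase hb hy1 h, .inl (by simp [*]), rfl⟩
  obtain ⟨X, u, hX, hy, hk⟩ := Nat.find_spec hex
  have hmin : ∀ X' u', Sep G B X' u' b → (y1 ∈ X' ∨ y2 ∈ X') → X.card ≤ X'.card := by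
    intro X' u' h1 h2
    rw [hk]
    exact Nat.find_min' hex ⟨X', u', h1, h2, rfl⟩
  rcases hy with hy | hy
  · exact leafL_aux hB hb hy1 hy2 hne hX hy hmin
  · obtain ⟨W, v, h1, h2⟩ := leafL_aux hB hb hy2 hy1 hne.symm hX hy
      (fun X' u' h h' => hmin X' u' h h'.symm)
    refine ⟨W, v, h1, ?_⟩
    rcases h2 with h2 | ⟨y, h3, h4⟩
    · exact .inl h2.symm
    · exact .inr ⟨y, h3.symm, h4⟩

theorem TC.conn {S : Finset V} (h : TC G S) (h3 : 3 ≤ S.card) : Conn G S := by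
  intro x hx y hy
  have : 0 < ((S.erase x).erase y).card := by
    have := Finset.pred_card_le_card_erase (s := S) (a := x)
    have := Finset.pred_card_le_card_erase (s := S.erase x) (a := y)
    omega
  obtain ⟨v, hv⟩ := Finset.card_pos.1 this
  simp at hv
  exact (h v x (by simp [hx]; tauto) y (by simp [hy]; tauto)).mono (Finset.erase_subset _ _)

theorem TC.four {c : V → Bool} (hc : ∀ u v, G.Adj u v → c u ≠ c v) {S : Finset V} (h : TC G S)
    (h3 : 3 ≤ S.card) : 4 ≤ S.card := by
  by_contra hlt
  obtain ⟨x, y, z, hxy, hxz, hyz, rfl⟩ := Finset.card_eq_three.1 (show S.card = 3 by omega)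
  have h1 := hc _ _ ((h z x (by simp [*]) y (by simp [*])).LP.adj (by grind) hxy)
  have h2 := hc _ _ ((h y x (by simp [*]) z (by simp [*]; tauto)).LP.adj (by grind) hxz)
  have h3 := hc _ _ ((h x y (by simp [*]) z (by simp [*])).LP.adj (by grind) hyz)
  revert h1 h2 h3
  cases c x <;> cases c y <;> cases c z <;> simp

theorem TC.four' {c : V → Bool} (hc : ∀ u v, G.Adj u v → c u ≠ c v) {S : Finset V} (h : TC G S)
    {w : V} (hw : w ∈ S) (h2 : 2 ≤ dg G S w) : 4 ≤ S.card := by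
  obtain ⟨p, hp, q, hq, hne, h1, h2⟩ := dg_two h2
  refine h.four hc ?_
  have : ({w, p, q} : Finset V) ⊆ S := by intro z; simp; rintro (rfl | rfl | rfl) <;> assumption
  have h3 := Finset.card_le_card this
  rwa [Finset.card_eq_three.2 ⟨w, p, q, h1.ne, h2.ne, hne, rfl⟩] at h3

theorem TC.dg2 {S : Finset V} (h : TC G S) (h3 : 3 ≤ S.card) {v : V} (hv : v ∈ S) :
    2 ≤ dg G S v := by
  have key : ∀ s, s ≠ v → ∃ w ∈ S, w ≠ s ∧ G.Adj v w := by
    intro s hs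
    have : 0 < ((S.erase v).erase s).card := by
      have := Finset.pred_card_le_card_erase (s := S) (a := v)
      have := Finset.pred_card_le_card_erase (s := S.erase v) (a := s)
      omega
    obtain ⟨x, hx⟩ := Finset.card_pos.1 this
    simp at hx
    obtain ⟨p, q, h1, h2, -, h4, h5, h6⟩ := (h s v (by simp [hv]; tauto) x (by simp; tauto)).exit {v}
      (by simp) (by simp; tauto)
    simp at h2 h5
    subst h2
    exact ⟨q, h5.2, h5.1, h4⟩
  obtain ⟨s, hs⟩ : ∃ s, s ≠ v := by
    obtain ⟨x, hx, hne⟩ := Finset.exists_mem_ne (by omega : 1 < S.card) v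
    exact ⟨x, hne⟩
  obtain ⟨w, hw, -, ha⟩ := key s hs
  obtain ⟨w', hw', hne, ha'⟩ := key w ha.ne'
  exact two_le_dg hw' hw hne ha' ha

theorem TC.insert {T : Finset V} (h : TC G T) (h3 : 3 ≤ T.card) {t : V} (h2 : 2 ≤ dg G T t) :
    TC G (insert t T) := by
  by_cases htT : t ∈ T
  · rwa [Finset.insert_eq_of_mem htT]
  intro s
  by_cases hst : s = t
  · subst hst
    rw [Finset.erase_insert htT]
    exact h.conn h3
  obtain ⟨p, hp, q, hq, hne, h1, h2⟩ := dg_two h2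
  obtain ⟨w, hw, hws, ha⟩ : ∃ w ∈ T, w ≠ s ∧ G.Adj t w := by
    by_cases hps : p = s
    · exact ⟨q, hq, fun h => hne (hps.trans h.symm), h2⟩
    · exact ⟨p, hp, hps, h1⟩
  have hsub : T.erase s ⊆ (Insert.insert t T).erase s := Finset.erase_subset_erase _ (Finset.subset_insert _ _)
  apply conn_of_root (r := w)
  intro x hx
  by_cases hxt : x = t
  · subst hxt
    exact (Reach.refl hx).tail ha (by simp [*])
  · simp [hxt] at hx
    exact (h s x (by simp [*]) w (by simp [*])).mono hsub

theorem K23 (hsplit : ∀ a b : V, a ≠ b → ∃ s : V → Bool, s a ≠ s b ∧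
      ∀ v w w', G.Adj v w → G.Adj v w' → s w ≠ s v → s w' ≠ s v → w = w')
    {t t' p q r : V} (hpq : p ≠ q) (hpr : p ≠ r) (hqr : q ≠ r)
    (h1 : G.Adj t p) (h2 : G.Adj t q) (h3 : G.Adj t r) (h1' : G.Adj t' p) (h2' : G.Adj t' q)
    (h3' : G.Adj t' r) : t = t' := by
  by_contra hne
  obtain ⟨s, hs, hu⟩ := hsplit t t' hne
  have a1 := fun h h' => hpq (hu t p q h1 h2 h h')
  have a2 := fun h h' => hpr (hu t p r h1 h3 h h')
  have a3 := fun h h' => hqr (hu t q r h2 h3 h h')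
  have b1 := fun h h' => hpq (hu t' p q h1' h2' h h')
  have b2 := fun h h' => hpr (hu t' p r h1' h3' h h')
  have b3 := fun h h' => hqr (hu t' q r h2' h3' h h')
  revert a1 a2 a3 b1 b2 b3 hs
  cases s t <;> cases s t' <;> cases s p <;> cases s q <;> cases s r <;> simp

theorem partition (hsplit : ∀ a b : V, a ≠ b → ∃ s : V → Bool, s a ≠ s b ∧
      ∀ v w w', G.Adj v w → G.Adj v w' → s w ≠ s v → s w' ≠ s v → w = w')
    {S : Finset V} (hS : Conn G S) {a b : V} (ha : a ∈ S) (hb : b ∈ S) (hab : a ≠ b) :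
    ∃ A B : Finset V, Disjoint A B ∧ S = A ∪ B ∧ Conn G A ∧ Conn G B ∧ a ∈ A ∧ b ∈ B ∧
      (∀ v ∈ B, ∀ w ∈ A, ∀ w' ∈ A, G.Adj v w → G.Adj v w' → w = w') ∧
      (∀ v ∈ A, ∀ w ∈ B, ∀ w' ∈ B, G.Adj v w → G.Adj v w' → w = w') := by
  obtain ⟨s, hs, hu⟩ := hsplit a b hab
  let C := comp G (S.filter (fun v => s v = s a)) a
  have hC : ∀ v ∈ C, v ∈ S ∧ s v = s a := fun v hv => by
    have := (mem_comp.1 hv).right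
    simpa using this
  have haC : a ∈ C := mem_comp.2 (.refl (by simp [ha]))
  have hbC : b ∉ C := fun h => hs (hC b h).2.symm
  -- edges leaving C switch side
  have hex : ∀ v ∈ C, ∀ w ∈ S, w ∉ C → G.Adj v w → s w ≠ s a := by
    intro v hv w hw hwC ha h
    exact hwC (mem_comp.2 ((mem_comp.1 hv).tail ha (by simp [hw, h])))
  let B := comp G (S \ C) b
  have hB : ∀ v ∈ B, v ∈ S ∧ v ∉ C := fun v hv => by
    have := (mem_comp.1 hv).right
    simpa using this
  have hbB : b ∈ B := mem_comp.2 (.refl (by simp [hb, hbC]))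
  -- edges leaving B go to C
  have hexB : ∀ v ∈ B, ∀ w ∈ S, w ∉ B → G.Adj v w → w ∈ C := by
    intro v hv w hw hwB ha
    by_contra h
    exact hwB (mem_comp.2 ((mem_comp.1 hv).tail ha (by simp [hw, h])))
  have hsw : ∀ v ∈ B, ∀ w ∈ S \ B, G.Adj v w → w ∈ C ∧ s w = s a ∧ s v ≠ s a := by
    intro v hv w hw ha
    simp at hw
    have hwC := hexB v hv w hw.1 hw.2 ha
    exact ⟨hwC, (hC w hwC).2, hex w hwC v (hB v hv).1 (hB v hv).2 ha.symm⟩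
  refine ⟨S \ B, B, Finset.sdiff_disjoint, ?_, ?_, comp_conn, ?_, hbB, ?_, ?_⟩
  · rw [Finset.sdiff_union_of_subset]
    exact fun v hv => (hB v hv).1
  · apply conn_of_root (r := a)
    have hCA : C ⊆ S \ B := fun v hv => by
      simp [(hC v hv).1]
      exact fun h => (hB v h).2 hv
    have hCr : ∀ v ∈ C, Reach G (S \ B) v a := fun v hv => (comp_conn v hv a haC).mono hCA
    intro x hx
    by_cases hxC : x ∈ C
    · exact hCr x hxC
    have hx' := Finset.mem_sdiff.1 hx
    obtain ⟨p, q, h1, h2, h3, h4, h5, h6⟩ := (hS x hx'.1 a ha).exit (S \ C) (by simp [hx'.1, hxC])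
      (by simp [haC])
    have hqC : q ∈ C := by simpa [h5] using h6
    have hr : Reach G (S \ C) x p := h3.mono Finset.inter_subset_right
    have : Reach G (S \ B) x p := by
      refine (hr.closed (fun y => Reach G (S \ B) x y ∧ Reach G (S \ C) x y) ?_
        ⟨.refl hx, .refl hr.left⟩).1
      rintro y ⟨hy, hy'⟩ hyS w hw hadj
      refine ⟨hy.tail hadj ?_, hy'.tail hadj hw⟩
      simp at hw ⊢
      refine ⟨hw.1, fun hwB => hx'.2 (mem_comp.2 ((mem_comp.1 hwB).trans (hy'.tail hadj (by simp [hw])).symm))⟩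
    exact (this.tail h4 (hCA hqC)).trans (hCr q hqC)
  · simp [ha]
    exact fun h => (hB a h).2 haC
  · intro v hv w hw w' hw' h h'
    have h1 := hsw v hv w hw h
    have h2 := hsw v hv w' hw' h'
    exact hu v w w' h h' (by rw [h1.2.1]; exact h1.2.2.symm) (by rw [h2.2.1]; exact h2.2.2.symm)
  · intro v hv w hw w' hw' h h'
    have h1 := hsw w hw v hv h.symm
    have h2 := hsw w' hw' v hv h'.symm
    exact hu v w w' h h' (by rw [h1.2.1]; exact h1.2.2) (by rw [h1.2.1]; exact h2.2.2)

end HC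
set_option linter.unusedSectionVars false
set_option linter.unusedVariables false
namespace HC
variable {V : Type*} [DecidableEq V] {G : SimpleGraph V}

def Ch (G : SimpleGraph V) (H : Finset V) (a u : V) : Prop :=
  ∀ s, ∀ v ∈ H, v ≠ s → Reach G (H.erase s) v a ∨ Reach G (H.erase s) v u

theorem IsP.reach {l : List V} {a b : V} (h : IsP G l a b) {S : Finset V} (hS : ∀ v ∈ l, v ∈ S) :
    Reach G S a b := by
  induction l generalizing a with
  | nil => simp [IsP] at h
  | cons x t ih =>
    cases t with
    | nil =>
      simp [IsP] at h
      rw [← h.1, ← h.2]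
      exact .refl (hS x (by simp))
    | cons y t =>
      obtain ⟨h3, h4, h5, h6⟩ := h
      simp at h5 h3
      subst h5
      have h8 := @ih y ⟨h3.2, (List.nodup_cons.1 h4).2, by simp, by simpa using h6⟩
        (fun v hv => hS v (List.mem_cons_of_mem _ hv))
      exact ((Reach.refl (hS x (by simp))).tail h3.1 h8.left).trans h8

theorem first_hit {H : Finset V} {v t : V} (h : Reach G H v t) {l : List V} (hv : v ∉ l)
    (ht : t ∈ l) : ∃ q p h, IsP G q v p ∧ (∀ x ∈ q, x ∈ H ∧ x ∉ l) ∧ G.Adj p h ∧ h ∈ H ∧ h ∈ l := by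
  obtain ⟨p, h', h1, h2, h3, h4, h5, h6⟩ := h.exit (H \ l.toFinset) (by simp [h.left, hv]) (by simp [ht])
  obtain ⟨q, hq, hq', -⟩ := h3.LP
  refine ⟨q, p, h', hq, ?_, h4, h5, by simpa [h5] using h6⟩
  intro x hx
  have := hq' x hx
  simp at this
  exact ⟨this.1, this.2⟩

theorem two_split {l : List V} {g h : V} (hg : g ∈ l) (hh : h ∈ l) (hne : g ≠ h) :
    ∃ l1 m l2, l = (l1 ++ g :: m) ++ h :: l2 ∨ l = (l1 ++ h :: m) ++ g :: l2 := by
  obtain ⟨l1, l2, rfl⟩ := List.append_of_mem hg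
  simp [hne.symm] at hh
  rcases hh with hh | hh
  · obtain ⟨m1, m2, rfl⟩ := List.append_of_mem hh
    exact ⟨m1, m2, l2, .inr (by simp)⟩
  · obtain ⟨m1, m2, rfl⟩ := List.append_of_mem hh
    exact ⟨l1, m1, m2, .inl (by simp)⟩

theorem IsP.cut {l1 m l2 : List V} {a u g h : V} (hp : IsP G ((l1 ++ g :: m) ++ h :: l2) a u) :
    IsP G (l1 ++ [g]) a g ∧ IsP G (h :: l2) h u ∧ ∀ v ∈ l1 ++ [g], v ∉ h :: l2 := by
  refine ⟨?_, hp.right, ?_⟩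
  · have : IsP G (l1 ++ g :: (m ++ h :: l2)) a u := by simpa using hp
    exact this.left
  · have := (List.nodup_append.1 hp.2.1).2.2
    intro v hv hv'
    refine this v ?_ v hv' rfl
    simp at hv ⊢
    tauto

theorem through {H : Finset V} {a u : V} (hC : Conn G H) (hCh : Ch G H a u)
    (ha : a ∈ H) (hu : u ∈ H) : ∀ v ∈ H, ∃ l, IsP G l a u ∧ (∀ x ∈ l, x ∈ H) ∧ (a ≠ u → v ∈ l) := by
  intro v hv
  by_cases hau : a = u
  · subst hau
    exact ⟨[a], IsP.single a, by simpa using ha, by simp⟩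
  refine (hC a ha v hv).closed
    (fun v => ∃ l, IsP G l a u ∧ (∀ x ∈ l, x ∈ H) ∧ (a ≠ u → v ∈ l)) ?_ ?_
  · rintro g ⟨l, hl, hlH, hgl⟩ hgH v hv hadj
    replace hgl := hgl hau
    by_cases hvl : v ∈ l
    · exact ⟨l, hl, hlH, fun _ => hvl⟩
    obtain ⟨t, ht, hr⟩ : ∃ t ∈ l, Reach G (H.erase g) v t := by
      rcases hCh g v hv hadj.ne' with h | h
      · exact ⟨a, hl.mem_left, h⟩
      · exact ⟨u, hl.mem_right, h⟩
    obtain ⟨q, p, h, hq, hqH, hph, hhH, hhl⟩ := first_hit hr hvl ht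
    have hne : g ≠ h := by rintro rfl; simp at hhH
    obtain ⟨l1, m, l2, rfl | rfl⟩ := two_split hgl hhl hne
    · obtain ⟨c1, c2, c3⟩ := hl.cut
      refine ⟨(l1 ++ [g]) ++ (q ++ h :: l2), c1.append hadj (hq.append hph c2 ?_) ?_, ?_, ?_⟩
      · intro x hx; have := hqH x hx; simp at this ⊢; tauto
      · intro x hx hx'
        rw [List.mem_append] at hx'
        rcases hx' with h | h
        · have := hqH x h; simp at this hx; tauto
        · exact c3 x hx h
      · intro x hx
        have := hlH x
        have := hqH x
        simp at hx this hlH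
        grind
      · intro _; have := hq.mem_left; simp [this]
    · obtain ⟨c1, c2, c3⟩ := hl.cut
      refine ⟨(l1 ++ [h]) ++ (q.reverse ++ g :: l2), c1.append hph.symm (hq.symm.append hadj.symm c2 ?_) ?_, ?_, ?_⟩
      · intro x hx; have := hqH x (by simpa using hx); simp at this ⊢; tauto
      · intro x hx hx'
        rw [List.mem_append] at hx'
        rcases hx' with h | h
        · have := hqH x (by simpa using h); simp at this hx; tauto
        · exact c3 x hx h
      · intro x hx
        have := hlH x
        have := hqH x
        simp at hx this hlH
        grind
      · intro _; have := hq.mem_left; simp [this]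
  · obtain ⟨l, h1, h2, -⟩ := (hC a ha u hu).LP
    exact ⟨l, h1, h2, fun _ => h1.mem_left⟩

theorem two {H : Finset V} {a u : V} (hC : Conn G H) (hCh : Ch G H a u) (hau : a ≠ u)
    (ha : a ∈ H) (hu : u ∈ H) {d1 d2 : V} (h1 : d1 ∈ H) (h2 : d2 ∈ H) (hne : d1 ≠ d2) :
    ∃ P Q : Finset V, P ⊆ H ∧ Q ⊆ H ∧ Disjoint P Q ∧
      ((LP G P 0 a d1 ∧ LP G Q 0 d2 u) ∨ (LP G P 0 a d2 ∧ LP G Q 0 d1 u)) := by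
  obtain ⟨l, hl, hlH, hd1⟩ := through hC hCh ha hu d1 h1
  replace hd1 := hd1 hau
  by_cases hd2 : d2 ∈ l
  · obtain ⟨l1, m, l2, rfl | rfl⟩ := two_split hd1 hd2 hne
    · obtain ⟨c1, c2, c3⟩ := hl.cut
      refine ⟨(l1 ++ [d1]).toFinset, (d2 :: l2).toFinset, ?_, ?_, ?_, .inl ⟨c1.LP (fun w hw => List.mem_toFinset.2 hw), c2.LP (fun w hw => List.mem_toFinset.2 hw)⟩⟩
      · intro x hx; apply hlH; simp at hx ⊢; tauto
      · intro x hx; apply hlH; simp at hx ⊢; tauto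
      · rw [Finset.disjoint_left]; intro x hx hx'
        exact c3 x (List.mem_toFinset.1 hx) (List.mem_toFinset.1 hx')
    · obtain ⟨c1, c2, c3⟩ := hl.cut
      refine ⟨(l1 ++ [d2]).toFinset, (d1 :: l2).toFinset, ?_, ?_, ?_, .inr ⟨c1.LP (fun w hw => List.mem_toFinset.2 hw), c2.LP (fun w hw => List.mem_toFinset.2 hw)⟩⟩
      · intro x hx; apply hlH; simp at hx ⊢; tauto
      · intro x hx; apply hlH; simp at hx ⊢; tauto
      · rw [Finset.disjoint_left]; intro x hx hx'
        exact c3 x (List.mem_toFinset.1 hx) (List.mem_toFinset.1 hx')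
  · obtain ⟨t, ht, hr⟩ : ∃ t ∈ l, Reach G (H.erase d1) d2 t := by
      rcases hCh d1 d2 h2 hne.symm with h | h
      · exact ⟨a, hl.mem_left, h⟩
      · exact ⟨u, hl.mem_right, h⟩
    obtain ⟨q, p, h, hq, hqH, hph, hhH, hhl⟩ := first_hit hr hd2 ht
    have hne : d1 ≠ h := by rintro rfl; simp at hhH
    obtain ⟨l1, m, l2, rfl | rfl⟩ := two_split hd1 hhl hne
    · obtain ⟨c1, c2, c3⟩ := hl.cut
      have c4 : IsP G (q ++ h :: l2) d2 u := by
        refine hq.append hph c2 ?_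
        intro x hx; have := hqH x hx; simp at this ⊢; tauto
      refine ⟨(l1 ++ [d1]).toFinset, (q ++ h :: l2).toFinset, ?_, ?_, ?_, .inl ⟨c1.LP (fun w hw => List.mem_toFinset.2 hw), c4.LP (fun w hw => List.mem_toFinset.2 hw)⟩⟩
      · intro x hx; apply hlH; simp at hx ⊢; tauto
      · intro x hx
        have := hlH x
        have := hqH x
        simp at hx this hlH
        grind
      · rw [Finset.disjoint_left]; intro x hx hx'
        rw [List.mem_toFinset] at hx hx'
        rw [List.mem_append] at hx'
        rcases hx' with h | h
        · have := hqH x h; simp at this hx; tauto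
        · exact c3 x hx h
    · obtain ⟨c1, c2, c3⟩ := hl.cut
      have c4 : IsP G ((l1 ++ [h]) ++ q.reverse) a d2 := by
        refine c1.append hph.symm hq.symm ?_
        intro x hx hx'; have := hqH x (by simpa using hx'); simp at this hx; tauto
      refine ⟨((l1 ++ [h]) ++ q.reverse).toFinset, (d1 :: l2).toFinset, ?_, ?_, ?_, .inr ⟨c4.LP (fun w hw => List.mem_toFinset.2 hw), c2.LP (fun w hw => List.mem_toFinset.2 hw)⟩⟩
      · intro x hx
        have := hlH x
        have := hqH x
        simp at hx this hlH
        grind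
      · intro x hx; apply hlH; simp at hx ⊢; tauto
      · rw [Finset.disjoint_left]; intro x hx hx'
        rw [List.mem_toFinset] at hx hx'
        rw [List.mem_append] at hx
        rcases hx with h | h
        · exact c3 x h hx'
        · have := hqH x (by simpa using h); simp at this hx'; tauto

/-! canonical part -/
open Classical in
noncomputable def canon (G : SimpleGraph V) (H : Finset V) (a u : V) : Finset V :=
  H.filter (fun v => ∀ s, s ≠ v → Reach G (H.erase s) v a ∨ Reach G (H.erase s) v u)

theorem mem_canon {H : Finset V} {a u v : V} : v ∈ canon G H a u ↔
    v ∈ H ∧ ∀ s, s ≠ v → Reach G (H.erase s) v a ∨ Reach G (H.erase s) v u := by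
  classical
  simp only [canon, Finset.mem_filter]

theorem canon_path {H : Finset V} {a u x y : V} (hx : x ∈ canon G H a u) (hy : y ∈ canon G H a u)
    {l : List V} (hl : IsP G l x y) (hlH : ∀ v ∈ l, v ∈ H) : ∀ v ∈ l, v ∈ canon G H a u := by
  intro v hv
  refine mem_canon.2 ⟨hlH v hv, fun s hs => ?_⟩
  obtain ⟨l1, l2, rfl⟩ := List.append_of_mem hv
  rw [mem_canon] at hx hy
  by_cases hs1 : s ∈ l1
  · have hs2 : s ∉ v :: l2 := by
      have := (List.nodup_append.1 hl.2.1).2.2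
      exact fun h => this s hs1 s h rfl
    have hr : Reach G (H.erase s) v y := hl.right.reach (fun w hw => by
      refine Finset.mem_erase.2 ⟨fun h => hs2 (h ▸ hw), hlH w (by simp at hw ⊢; tauto)⟩)
    have hsy : s ≠ y := fun h => by have := hr.right; simp [h] at this
    rcases hy.2 s hsy with h | h
    · exact .inl (hr.trans h)
    · exact .inr (hr.trans h)
  · have hs2 : s ∉ l1 ++ [v] := by simp [hs1, hs]
    have hr : Reach G (H.erase s) x v := hl.left.reach (fun w hw => by
      refine Finset.mem_erase.2 ⟨fun h => hs2 (h ▸ hw), hlH w (by simp at hw ⊢; tauto)⟩)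
    have hsy : s ≠ x := fun h => by have := hr.left; simp [h] at this
    rcases hx.2 s hsy with h | h
    · exact .inl (hr.symm.trans h)
    · exact .inr (hr.symm.trans h)

theorem canon_a {H : Finset V} {a u : V} (ha : a ∈ H) : a ∈ canon G H a u :=
  mem_canon.2 ⟨ha, fun s hs => .inl (.refl (by simp [ha, hs.symm]))⟩
theorem canon_u {H : Finset V} {a u : V} (hu : u ∈ H) : u ∈ canon G H a u :=
  mem_canon.2 ⟨hu, fun s hs => .inr (.refl (by simp [hu, hs.symm]))⟩

structure Cfg (G : SimpleGraph V) (S A0 W0 B : Finset V) (u0 a b : V) : Prop where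
  aA : a ∈ A0
  uA : u0 ∈ A0
  bB : b ∈ B
  d1 : Disjoint A0 W0
  d2 : Disjoint A0 B
  d3 : Disjoint W0 B
  eq : S = A0 ∪ W0 ∪ B
  ne : W0.Nonempty
  cA : Conn G A0
  ch : Ch G A0 a u0
  cB : Conn G B
  one : ∀ v ∈ B, ∀ w ∈ A0 ∪ W0, ∀ w' ∈ A0 ∪ W0, G.Adj v w → G.Adj v w' → w = w'
  single : u0 = a → A0 = {a}
  nb : ∀ w ∈ W0, ∀ v ∈ A0, G.Adj w v → v = u0

theorem cfg_canon {S A B W0 : Finset V} {a b u0 : V} (hS : TC G S) (hd : Disjoint A B)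
    (hSe : S = A ∪ B) (hA : Conn G A) (hB : Conn G B) (ha : a ∈ A) (hb : b ∈ B)
    (hone : ∀ v ∈ B, ∀ w ∈ A, ∀ w' ∈ A, G.Adj v w → G.Adj v w' → w = w')
    (hW : Sep G A W0 u0 a) :
    ∃ B', B ⊆ B' ∧ Cfg G S (canon G (A \ W0) a u0) W0 B' u0 a b := by
  have hcH := hW.conn hA
  have hdl := Finset.disjoint_left.1 hd
  have haH : a ∈ A \ W0 := by simp [ha, hW.rW]
  have huH : u0 ∈ A \ W0 := by simp [hW.uB, hW.uW]
  have hcs : canon G (A \ W0) a u0 ⊆ A \ W0 := fun v hv => (mem_canon.1 hv).1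
  have hsubA : canon G (A \ W0) a u0 ∪ W0 ⊆ A := by
    intro v hv
    rcases Finset.mem_union.1 hv with h | h
    · exact (Finset.mem_sdiff.1 (hcs h)).1
    · exact hW.sub h
  have hBB : B ⊆ S \ (canon G (A \ W0) a u0 ∪ W0) := by
    intro v hv
    refine Finset.mem_sdiff.2 ⟨by simp [hSe, hv], fun h => hdl (hsubA h) hv⟩
  -- removed vertices
  have hrem : ∀ v ∈ S \ (canon G (A \ W0) a u0 ∪ W0), v ∉ B → ∃ s Y, s ∈ A ∧ v ∈ Y ∧ s ∉ Y ∧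
      Y ⊆ A \ W0 ∧ Conn G Y ∧ (∀ w ∈ Y, w ∉ canon G (A \ W0) a u0) ∧
      (∀ w ∈ Y, ∀ x ∈ A, G.Adj w x → x ∈ Y ∨ x = s) := by
    intro v hv hvB
    simp only [Finset.mem_sdiff, Finset.mem_union, hSe] at hv
    have hvA : v ∈ A := by tauto
    have hvH : v ∈ A \ W0 := by simp; tauto
    have hvc : v ∉ canon G (A \ W0) a u0 := by tauto
    rw [mem_canon] at hvc
    push Not at hvc
    obtain ⟨s, hsv, h1, h2⟩ := hvc hvH
    have hsH : s ∈ A \ W0 := by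
      by_contra h
      rw [Finset.erase_eq_of_notMem h] at h1
      exact h1 (hcH v hvH a haH)
    refine ⟨s, comp G ((A \ W0).erase s) v, (Finset.mem_sdiff.1 hsH).1,
      mem_comp.2 (.refl (by simp at hvH ⊢; tauto)), ?_, ?_, comp_conn, ?_, ?_⟩
    · intro h; have := (mem_comp.1 h).right; simp at this
    · intro w hw; exact Finset.mem_of_mem_erase (mem_comp.1 hw).right
    · intro w hw hwc
      rw [mem_comp] at hw
      have hws : s ≠ w := fun h => by have := hw.right; simp [h] at this
      rcases (mem_canon.1 hwc).2 s hws with h | h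
      · exact h1 (hw.trans h)
      · exact h2 (hw.trans h)
    · intro w hw x hx hadj
      by_cases hxs : x = s
      · exact .inr hxs
      have hwH := (mem_comp.1 hw).right
      simp at hwH
      have hxW : x ∉ W0 := by
        intro hxW
        rcases hW.cl x hxW w hwH.2.1 hadj.symm with h | rfl
        · exact hwH.2.2 h
        · exact h2 (mem_comp.1 hw)
      exact .inl (mem_comp.2 ((mem_comp.1 hw).tail hadj (by simp [*])))
  refine ⟨S \ (canon G (A \ W0) a u0 ∪ W0), hBB, canon_a haH, canon_u huH, hBB hb, ?_, ?_, ?_, ?_, hW.ne,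
    ?_, ?_, ?_, ?_, ?_, ?_⟩
  · rw [Finset.disjoint_left]; intro x hx; exact (Finset.mem_sdiff.1 (hcs hx)).2
  · rw [Finset.disjoint_left]; intro x hx; simp [hx]
  · rw [Finset.disjoint_left]; intro x hx; simp [hx]
  · rw [Finset.union_sdiff_of_subset]
    rw [hSe]; exact hsubA.trans Finset.subset_union_left
  · intro x hx y hy
    obtain ⟨l, h1, h2, -⟩ := (hcH x (hcs hx) y (hcs hy)).LP
    exact h1.reach (canon_path hx hy h1 h2)
  · intro s v hv hvs
    have key : ∀ t ∈ canon G (A \ W0) a u0, Reach G ((A \ W0).erase s) v t →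
        Reach G ((canon G (A \ W0) a u0).erase s) v t := by
      intro t ht hr
      obtain ⟨l, h1, h2, -⟩ := hr.LP
      have := canon_path hv ht h1 (fun w hw => Finset.mem_of_mem_erase (h2 w hw))
      exact h1.reach (fun w hw => Finset.mem_erase.2 ⟨Finset.ne_of_mem_erase (h2 w hw), this w hw⟩)
    rcases (mem_canon.1 hv).2 s hvs.symm with h | h
    · exact .inl (key a (canon_a haH) h)
    · exact .inr (key u0 (canon_u huH) h)
  · apply conn_of_root (r := b)
    intro v hv
    by_cases hvB : v ∈ B
    · exact (hB v hvB b hb).mono hBB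
    obtain ⟨s, Y, hsA, hvY, hsY, hYA, hYc, hYd, hYn⟩ := hrem v hv hvB
    have hbY : b ∉ Y := fun h => hdl (Finset.mem_sdiff.1 (hYA h)).1 hb
    have hbs : b ≠ s := fun h => hdl hsA (h ▸ hb)
    obtain ⟨p, q, h1, h2, h3, h4, h5, h6⟩ := (hS s v
      (Finset.mem_erase.2 ⟨fun h => hsY (h ▸ hvY), (Finset.mem_sdiff.1 hv).1⟩) b
      (Finset.mem_erase.2 ⟨hbs, by simp [hSe, hb]⟩)).exit Y hvY hbY
    have hYB : Y ⊆ S \ (canon G (A \ W0) a u0 ∪ W0) := by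
      intro w hw
      have h7 := Finset.mem_sdiff.1 (hYA hw)
      have h8 := hYd w hw
      simp only [Finset.mem_sdiff, hSe, Finset.mem_union]
      tauto
    have hqB : q ∈ B := by
      simp only [Finset.mem_erase, hSe, Finset.mem_union] at h5
      rcases h5.2 with h | h
      · rcases hYn p h2 q h h4 with h | h
        · exact absurd h h6
        · exact absurd h h5.1
      · exact h
    exact ((h3.mono (Finset.inter_subset_right.trans hYB)).tail h4 (hBB hqB)).trans
      ((hB q hqB b hb).mono hBB)
  · intro v hv w hw w' hw' h h'
    by_cases hvB : v ∈ B
    · exact hone v hvB w (hsubA hw) w' (hsubA hw') h h'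
    obtain ⟨s, Y, hsA, hvY, hsY, hYA, hYc, hYd, hYn⟩ := hrem v hv hvB
    have key : ∀ w ∈ canon G (A \ W0) a u0 ∪ W0, G.Adj v w → w = s := by
      intro w hw h
      rcases hYn v hvY w (hsubA hw) h with h1 | h1
      · rcases Finset.mem_union.1 hw with h2 | h2
        · exact absurd h2 (hYd w h1)
        · exact absurd h2 (Finset.mem_sdiff.1 (hYA h1)).2
      · exact h1
    rw [key w hw h, key w' hw' h']
  · intro h
    ext v
    rw [Finset.mem_singleton]
    constructor
    · intro hv
      by_contra hne
      rcases (mem_canon.1 hv).2 a (Ne.symm hne) with h1 | h1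
      · have := h1.right; simp at this
      · have := h1.right; simp [h] at this
    · rintro rfl
      exact canon_a haH
  · intro w hw v hv hadj
    have := Finset.mem_sdiff.1 (hcs hv)
    rcases hW.cl w hw v this.1 hadj with h | h
    · exact absurd h this.2
    · exact h

def PS (G : SimpleGraph V) (d : ℕ) (S : Finset V) : Prop := ∀ a ∈ S, ∀ b ∈ S, a ≠ b → ∀ z,
  (∀ v ∈ S, v ≠ a → v ≠ b → v ≠ z → d ≤ dg G S v) → LP G S (2 ^ d - 2) a b

def PP (G : SimpleGraph V) (d : ℕ) : Prop := ∀ S, 4 ≤ S.card → TC G S → PS G d S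

theorem Leaf.path {c : V → Bool} (hc : ∀ u v, G.Adj u v → c u ≠ c v) {B W : Finset V} {u r : V}
    (h : Leaf G B W u r) (hB : Conn G B) (hr : r ∈ B) {e : ℕ}
    (hP : 4 ≤ (insert u W).card → TC G (insert u W) → PS G e (insert u W)) {x y z : V}
    (hx : x ∈ insert u W) (hy : y ∈ insert u W) (hxy : x ≠ y)
    (hu : u = x ∨ u = y ∨ u = z)
    (hd : ∀ v ∈ W, v ≠ x → v ≠ y → v ≠ z → e ≤ dg G B v)
    (h2 : ∃ v ∈ W, 2 ≤ dg G B v) : LP G (insert u W) (2 ^ e - 2) x y := by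
  have hle : ∀ v ∈ W, dg G B v ≤ dg G (insert u W) v := by
    intro v hv
    apply dg_le
    intro w hw ha
    rcases h.1.cl v hv w hw ha with h | h <;> simp [h]
  have htc := h.tc hB hr
  obtain ⟨v, hv, hv2⟩ := h2
  refine hP (htc.four' hc (w := v) (by simp [hv]) (hv2.trans (hle v hv))) htc x hx y hy hxy z ?_
  intro v hv h1 h2 h3
  rcases Finset.mem_insert.1 hv with rfl | hv
  · rcases hu with h | h | h
    · exact absurd h h1
    · exact absurd h h2
    · exact absurd h h3
  · exact (hd v hv h1 h2 h3).trans (hle v hv)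

end HC
set_option linter.unusedSectionVars false
set_option linter.unusedVariables false
namespace HC
variable {V : Type*} [DecidableEq V] {G : SimpleGraph V}

theorem Cfg.foot {S A0 W0 B W1 : Finset V} {u0 a b u1 : V} (h : Cfg G S A0 W0 B u0 a b)
    (hS : TC G S) (hL : Leaf G B W1 u1 b) :
    ∃ p ∈ W1, ∃ q ∈ A0 ∪ W0, G.Adj p q := by
  have D2 := Finset.disjoint_left.1 h.d2
  obtain ⟨w, hw⟩ := hL.1.ne
  have hwB := hL.1.sub hw
  have heq := h.eq
  obtain ⟨p, q, h1, h2, h3, h4, h5, h6⟩ := (hS u1 w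
    (Finset.mem_erase.2 ⟨fun h => hL.1.uW (h ▸ hw), by simp [heq, hwB]⟩) a
    (Finset.mem_erase.2 ⟨fun h' => D2 h.aA (h' ▸ hL.1.uB), by simp [heq, h.aA]⟩)).exit W1 hw
      (fun h' => D2 h.aA (hL.1.sub h'))
  refine ⟨p, h2, q, ?_, h4⟩
  rw [Finset.mem_erase, heq, Finset.mem_union] at h5
  rcases h5.2 with h7 | h7
  · exact h7
  · rcases hL.1.cl p h2 q h7 h4 with h8 | h8
    · exact absurd h8 h6
    · exact absurd h8 h5.1

theorem F1 {c : V → Bool} (hc : ∀ u v, G.Adj u v → c u ≠ c v) {d : ℕ}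
    {S A0 W0 B W1 : Finset V} {u0 a b u1 d1 z : V} (hS : TC G S) (h : Cfg G S A0 W0 B u0 a b)
    (hL : Leaf G B W1 u1 b) (hd1 : d1 ∈ A0)
    (hnb : ∀ w ∈ W1, ∀ v ∈ A0 ∪ W0, G.Adj w v → v = d1)
    (hdeg : ∀ v ∈ W1, v ≠ z → d ≤ dg G S v) (h2 : ∃ v ∈ W1, 2 ≤ dg G B v)
    (IHs : ∀ T : Finset V, T.card < S.card → 4 ≤ T.card → TC G T → PS G d T) :
    LP G S (2 ^ d - 2) a b := by
  have D1 := Finset.disjoint_left.1 h.d1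
  have D2 := Finset.disjoint_left.1 h.d2
  have D3 := Finset.disjoint_left.1 h.d3
  have heq := h.eq
  have hT : insert u1 W1 ⊆ B := by
    intro x hx
    rcases Finset.mem_insert.1 hx with rfl | h'
    · exact hL.1.uB
    · exact hL.1.sub h'
  have hd1u : d1 ∉ insert u1 W1 := fun h' => D2 hd1 (hT h')
  obtain ⟨p, hp, q, hq, hpq⟩ := h.foot hS hL
  obtain rfl := hnb p hp q hq hpq
  have hpu : p ≠ u1 := fun h => hL.1.uW (h ▸ hp)
  have hA := (h.cA a h.aA q hd1).LP
  have hBb := (hL.1.toU h.cB h.bB hL.1.rW).symm.LP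
  by_cases hall : ∀ w ∈ W1, G.Adj w q → w = p
  · have hlt : (insert u1 W1).card < S.card := by
      apply Finset.card_lt_card
      refine Finset.ssubset_iff_subset_ne.2 ⟨?_, ?_⟩
      · rw [heq]; exact hT.trans Finset.subset_union_right
      · intro he; rw [he, heq] at hd1u; simp [hd1] at hd1u
    have hm := hL.path hc h.cB h.bB (IHs _ hlt) (x := p) (y := u1) (z := z) (by simp [hp]) (by simp) hpu
      (.inr (.inl rfl)) (by
        intro v hv h1 h3 h4
        refine (hdeg v hv h4).trans (dg_le ?_)
        intro w hw ha
        rw [heq, Finset.mem_union] at hw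
        rcases hw with hw | hw
        · have := hnb v hv w hw ha
          subst this
          exact absurd (hall v hv ha) h1
        · exact hw) h2
    refine ((hA.join hpq.symm hm ?_).glue hBb ?_).mono ?_ (by omega)
    · rw [Finset.disjoint_left]; exact fun x hx hx' => D2 hx (hT hx')
    · intro v hv hv'
      simp only [Finset.mem_union, Finset.mem_insert, Finset.mem_sdiff] at hv hv'
      grind
    · rw [heq]; intro x hx
      have hsub := hL.1.sub
      have huB := hL.1.uB
      simp only [Finset.mem_union, Finset.mem_insert, Finset.mem_sdiff] at hx ⊢
      grind
  · push Not at hall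
    obtain ⟨p', hp', hpq', hne⟩ := hall
    obtain ⟨v0, hv0, hv02⟩ := h2
    have hle : dg G B v0 ≤ dg G (insert u1 W1) v0 := by
      apply dg_le
      intro w hw ha
      rcases hL.1.cl v0 hv0 w hw ha with h | h <;> simp [h]
    have h4 := (hL.tc h.cB h.bB).four' hc (w := v0) (by simp [hv0]) (by omega)
    have htc := (hL.tc h.cB h.bB).insert (by omega) (t := q)
      (two_le_dg (by simp [hp]) (by simp [hp']) hne.symm hpq.symm hpq'.symm)
    have hlt : (insert q (insert u1 W1)).card < S.card := by
      apply Finset.card_lt_card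
      refine Finset.ssubset_iff_subset_ne.2 ⟨?_, ?_⟩
      · rw [heq]; intro x hx
        rcases Finset.mem_insert.1 hx with rfl | h'
        · simp [hd1]
        · simp [hT h']
      · intro he
        obtain ⟨w, hw⟩ := h.ne
        have : w ∈ S := by rw [heq]; simp [hw]
        rw [← he] at this
        rcases Finset.mem_insert.1 this with rfl | h'
        · exact D1 hd1 hw
        · exact D3 hw (hT h')
    have h4' := Finset.card_le_card (Finset.subset_insert q (insert u1 W1))
    have hm := IHs _ hlt (by omega) htc q (by simp) u1 (by simp)
      (fun h => hd1u (by simp [h])) z (by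
        intro v hv h1 h3 h5
        have hv1 : v ∈ W1 := by simp at hv; tauto
        refine (hdeg v hv1 h5).trans (dg_le ?_)
        intro w hw ha
        rw [heq, Finset.mem_union] at hw
        rcases hw with hw | hw
        · simp [hnb v hv1 w hw ha]
        · rcases hL.1.cl v hv1 w hw ha with h | h <;> simp [h])
    refine ((hA.glue hm ?_).glue hBb ?_).mono ?_ (by omega)
    · intro v hv hv'
      rcases Finset.mem_insert.1 hv' with h' | h'
      · exact h'
      · exact absurd (hT h') (D2 hv)
    · intro v hv hv'
      simp only [Finset.mem_union, Finset.mem_insert, Finset.mem_sdiff] at hv hv'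
      grind
    · rw [heq]; intro x hx
      have hsub := hL.1.sub
      have huB := hL.1.uB
      simp only [Finset.mem_union, Finset.mem_insert, Finset.mem_sdiff] at hx ⊢
      grind

theorem two_pow_facts {e : ℕ} (he : 2 ≤ e) :
    ∃ f, 2 ^ e - 2 = f ∧ f % 2 = 0 ∧ 2 ^ (e + 1) - 2 = 2 * f + 2 := by
  obtain ⟨k, rfl⟩ : ∃ k, e = k + 1 := ⟨e - 1, by omega⟩
  have : 1 ≤ 2 ^ k := Nat.one_le_two_pow
  refine ⟨_, rfl, ?_, ?_⟩ <;> rw [pow_succ] <;> try rw [pow_succ]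
  all_goals omega

theorem assembleI {S A0 W0 B W1 : Finset V} {u0 a b u1 x y : V} (h : Cfg G S A0 W0 B u0 a b)
    (hL : Leaf G B W1 u1 b) (hx : x ∈ W0) (hy : y ∈ W1) (hxy : G.Adj x y) {k0 f k k1 m : ℕ}
    (h0 : LP G A0 k0 a u0) (h1 : LP G (insert u0 W0) f u0 x) (h2 : LP G (insert u1 W1) k y u1)
    (h3 : LP G (B \ W1) k1 u1 b) (hm : m ≤ k0 + f + k + k1 + 1) : LP G S m a b := by
  have D1 := Finset.disjoint_left.1 h.d1
  have D2 := Finset.disjoint_left.1 h.d2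
  have D3 := Finset.disjoint_left.1 h.d3
  have heq := h.eq
  have hsub := hL.1.sub
  have huB := hL.1.uB
  have huA := h.uA
  refine (((h0.glue h1 ?_).join hxy (h2.glue h3 ?_) ?_)).mono ?_ (by omega)
  · intro v hv hv'; simp at hv'; grind
  · intro v hv hv'; simp at hv hv'; grind
  · rw [Finset.disjoint_left]; intro v hv hv'; simp at hv hv'; grind
  · rw [heq]; intro v hv; simp at hv ⊢; grind

theorem caseI {c : V → Bool} (hc : ∀ u v, G.Adj u v → c u ≠ c v) {e : ℕ} (he : 2 ≤ e)
    {S A0 W0 B W1 : Finset V} {u0 a b u1 z : V} (hS : TC G S) (h : Cfg G S A0 W0 B u0 a b)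
    (hL : Leaf G B W1 u1 b)
    (hp0 : ∀ x ∈ W0, LP G (insert u0 W0) (2 ^ e - 2) u0 x)
    (hB : ∀ v ∈ B, v ≠ b → e ≤ dg G B v)
    (hdS : ∀ v ∈ B, v ≠ b → v ≠ z → e + 1 ≤ dg G S v)
    (hz : z = b ∨ 3 ≤ e) (IHe : PP G e)
    {x y : V} (hx : x ∈ W0) (hy : y ∈ W1) (hxy : G.Adj x y) :
    LP G S (2 ^ (e + 1) - 2) a b := by
  obtain ⟨f, hf, hf2, hf3⟩ := two_pow_facts he
  have hne : ∀ v ∈ W1, v ≠ b := fun v hv h => hL.1.rW (h ▸ hv)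
  have hdW : ∀ v ∈ W1, e ≤ dg G B v := fun v hv => hB v (hL.1.sub hv) (hne v hv)
  have hp1 : ∀ y ∈ W1, LP G (insert u1 W1) f y u1 := by
    intro y hy
    rw [← hf]
    exact hL.path hc h.cB h.bB (IHe _) (z := y) (by simp [hy]) (by simp) (fun h => hL.1.uW (h ▸ hy))
      (.inr (.inl rfl)) (fun v hv _ _ _ => hdW v hv) ⟨y, hy, he.trans (hdW y hy)⟩
  have hA := (h.cA a h.aA u0 h.uA).LP
  have hb' := (hL.1.toU h.cB h.bB hL.1.rW).symm.LP
  rw [hf3]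
  by_cases hau : a ≠ u0
  · exact assembleI h hL hx hy hxy (hA.one hau) (hp0 x hx) (hp1 y hy) hb' (by omega)
  by_cases hub : u1 ≠ b
  · exact assembleI h hL hx hy hxy hA (hp0 x hx) (hp1 y hy) (hb'.one hub) (by omega)
  push Not at hau hub
  have hA0 := h.single hau.symm
  subst hub
  by_cases hcab : c a = c u1
  · have : LP G S (2 * f + 1) a u1 :=
      assembleI h hL hx hy hxy hA (hp0 x hx) (hp1 y hy) hb' (by omega)
    exact this.par_even hc hcab (by omega)
  by_cases hodd : ∃ x ∈ W0, ∃ y ∈ W1, G.Adj x y ∧ c y ≠ c u1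
  · obtain ⟨x, hx, y, hy, hxy, hcy⟩ := hodd
    exact assembleI h hL hx hy hxy hA (hp0 x hx) ((hp1 y hy).par_odd hc hcy hf2) hb' (by omega)
  push Not at hodd
  have hcy := hodd x hx y hy hxy
  suffices hs : LP G (insert u1 W1) (f + 1) y u1 from
    assembleI h hL hx hy hxy hA (hp0 x hx) hs hb' (by omega)
  have hev : ∀ v ∈ W1, c v = c u1 → e ≤ dg G W1 v := by
    intro v hv hcv
    refine (hdW v hv).trans (dg_le ?_)
    intro w hw ha
    rcases hL.1.cl v hv w hw ha with h' | rfl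
    · exact h'
    · exact absurd hcv (hc _ _ ha)
  have hod : ∀ v ∈ W1, c v ≠ c u1 → dg G S v ≤ dg G W1 v + 1 := by
    intro v hv hcv
    have key : ∀ w ∈ S, G.Adj v w → w ∉ W1 → w = u1 := by
      intro w hw ha hwW
      rw [h.eq, hA0] at hw
      simp only [Finset.mem_union, Finset.mem_singleton] at hw
      rcases hw with (rfl | hw) | hw
      · exfalso
        have := hc _ _ ha
        revert this hcv hcab
        cases c v <;> cases c u1 <;> cases c w <;> simp
      · exact absurd (hodd w hw v hv ha.symm) hcv
      · rcases hL.1.cl v hv w hw ha with h' | h'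
        · exact absurd h' hwW
        · exact h'
    apply dg_le1
    intro w hw w' hw' ha ha' h1 h2
    rw [key w hw ha h1, key w' hw' ha' h2]
  have hBS : ∀ v, dg G B v ≤ dg G S v := fun v => dg_le (fun w hw _ => by rw [h.eq]; simp [hw])
  obtain ⟨t, htW, hyt⟩ := dg_pos ((by omega : 1 ≤ e).trans (hev y hy hcy))
  obtain ⟨M, m, hMs, hM⟩ := (sep_erase (G := G) hy htW hyt.ne').leaf
  have hMW := hM.1.sub
  -- vertex of M adjacent to the root
  obtain ⟨e0, he0, hadj0⟩ : ∃ e0 ∈ M, G.Adj e0 u1 := by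
    obtain ⟨w, hw⟩ := hM.1.ne
    have hmu : u1 ≠ m := fun h' => hL.1.uW (h' ▸ hM.1.uB)
    obtain ⟨p, q, h1, h2, h3, h4, h5, h6⟩ := (hL.tc h.cB h.bB m w
      (by simp [hMW hw]; exact fun h' => hM.1.uW (h' ▸ hw)) u1 (by simp [hmu])).exit M hw
      (fun h' => hL.1.uW (hMW h'))
    refine ⟨p, h2, ?_⟩
    simp at h5
    rcases h5.2 with rfl | h7
    · exact h4
    · rcases hM.1.cl p h2 q h7 h4 with h8 | h8
      · exact absurd h8 h6
      · exact absurd h8 h5.1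
  have hmid := hM.path hc hL.conn hy (IHe _) (x := m) (y := e0) (z := z) (by simp) (by simp [he0])
    (fun h => hM.1.uW (h ▸ he0)) (.inl rfl) (by
      intro v hv _ _ hvz
      by_cases hcv : c v = c u1
      · exact hev v (hMW hv) hcv
      · have := hod v (hMW hv) hcv
        have := hdS v (hL.1.sub (hMW hv)) (hne v (hMW hv)) hvz
        omega) (by
      refine ⟨e0, he0, ?_⟩
      have hv := hMW he0
      by_cases hcv : c e0 = c u1
      · exact he.trans (hev e0 hv hcv)
      · have h1 := hod e0 hv hcv
        have h2 := hdW e0 hv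
        have h3 := hBS e0
        rcases hz with rfl | hz
        · have := hdS e0 (hL.1.sub hv) (hne e0 hv) (hne e0 hv)
          omega
        · omega)
  rw [hf] at hmid
  have hym := (hM.1.toU hL.conn hy hM.1.rW).LP
  refine ((hym.glue hmid ?_).join hadj0 (LP.refl (Finset.mem_singleton_self u1)) ?_).mono ?_ (by omega)
  · intro v hv hv'; simp at hv hv'; tauto
  · rw [Finset.disjoint_right]
    intro v hv hv'
    have huW := hL.1.uW
    have hmW := hM.1.uB
    simp only [Finset.mem_union, Finset.mem_insert, Finset.mem_sdiff, Finset.mem_singleton] at hv hv'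
    subst hv
    rcases hv' with h' | rfl | h'
    · exact huW h'.1
    · exact huW hmW
    · exact huW (hMW h')
  · intro v hv
    have hmW := hM.1.uB
    simp only [Finset.mem_union, Finset.mem_insert, Finset.mem_sdiff, Finset.mem_singleton] at hv ⊢
    rcases hv with (h' | rfl | h') | rfl
    · simp [h'.1]
    · simp [hmW]
    · simp [hMW h']
    · simp

theorem assembleII {S A0 W0 B W1 P Q : Finset V} {u0 a b u1 x y d d' p p' : V}
    (h : Cfg G S A0 W0 B u0 a b)
    (hL : Leaf G B W1 u1 b) (hx : x ∈ W0) (hP : P ⊆ A0) (hQ : Q ⊆ A0) (hPQ : Disjoint P Q)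
    {T : Finset V} (hT : T ⊆ insert u1 W1) {f g k m : ℕ}
    (h1 : LP G P 0 a d) (hdp : G.Adj d p) (h2 : LP G T g p p')
    (hdp' : G.Adj p' d') (h3 : LP G Q 0 d' u0) (h4 : LP G (insert u0 W0) f u0 x) (hxy : G.Adj x y)
    {R : Finset V} (hR : R ⊆ B \ T) (h5 : LP G R k y b) (hm : m ≤ g + f + k + 3) : LP G S m a b := by
  have D1 := Finset.disjoint_left.1 h.d1
  have D2 := Finset.disjoint_left.1 h.d2
  have D3 := Finset.disjoint_left.1 h.d3
  have D4 := Finset.disjoint_left.1 hPQ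
  have heq := h.eq
  have huQ : u0 ∈ Q := by
    obtain ⟨l, hl, hlQ, -⟩ := h3
    exact hlQ _ hl.mem_right
  have hTB : T ⊆ B := by
    intro v hv
    rcases Finset.mem_insert.1 (hT hv) with rfl | h'
    · exact hL.1.uB
    · exact hL.1.sub h'
  have hR' : ∀ v ∈ R, v ∈ B ∧ v ∉ T := fun v hv => Finset.mem_sdiff.1 (hR hv)
  refine (((h1.join hdp h2 ?_).join hdp' (h3.glue h4 ?_) ?_).join hxy h5 ?_).mono ?_ (by omega)
  · rw [Finset.disjoint_left]; intro v hv hv'; exact D2 (hP hv) (hTB hv')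
  · intro v hv hv'
    rcases Finset.mem_insert.1 hv' with h' | h'
    · exact h'
    · exact absurd h' (D1 (hQ hv))
  · rw [Finset.disjoint_left]; intro v hv hv'
    simp only [Finset.mem_union, Finset.mem_insert] at hv hv'
    grind
  · rw [Finset.disjoint_left]; intro v hv hv'
    simp only [Finset.mem_union, Finset.mem_insert] at hv
    grind
  · intro v hv
    rw [heq]
    simp only [Finset.mem_union, Finset.mem_insert] at hv ⊢
    grind

theorem caseII {c : V → Bool} (hc : ∀ u v, G.Adj u v → c u ≠ c v) {d : ℕ}
    {S A0 W0 B W1 : Finset V} {u0 a b u1 z : V} (hS : TC G S) (h : Cfg G S A0 W0 B u0 a b)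
    (hL : Leaf G B W1 u1 b)
    (hno : ∀ x ∈ W0, ∀ y ∈ W1, ¬ G.Adj x y)
    (hdS : ∀ v ∈ W1, v ≠ z → d ≤ dg G S v) (h2 : ∃ v ∈ W1, 2 ≤ dg G B v)
    (IHs : ∀ T : Finset V, T.card < S.card → 4 ≤ T.card → TC G T → PS G d T)
    {x y : V} {f g k : ℕ} (hx : x ∈ W0) (hp0 : LP G (insert u0 W0) f u0 x) (hxy : G.Adj x y)
    {T : Finset V} (hT : T ⊆ insert u1 W1) (hg : ∀ p ∈ W1, ∀ p' ∈ W1, p ≠ p' → LP G T g p p')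
    {R : Finset V} (hR : R ⊆ B \ T) (h5 : LP G R k y b) (hm : 2 ^ d - 2 ≤ g + f + k + 3) :
    LP G S (2 ^ d - 2) a b := by
  obtain ⟨p, hp, q, hq, hpq⟩ := h.foot hS hL
  have hqA : ∀ p ∈ W1, ∀ q ∈ A0 ∪ W0, G.Adj p q → q ∈ A0 := by
    intro p hp q hq hpq
    rcases Finset.mem_union.1 hq with h' | h'
    · exact h'
    · exact absurd hpq.symm (hno q h' p hp)
  by_cases hall : ∀ w ∈ W1, ∀ v ∈ A0 ∪ W0, G.Adj w v → v = q
  · exact F1 hc hS h hL (hqA p hp q hq hpq) hall hdS h2 IHs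
  push Not at hall
  obtain ⟨p', hp', q', hq', hpq', hne⟩ := hall
  have hpp : p ≠ p' := by
    rintro rfl
    exact hne (h.one p (hL.1.sub hp) q' hq' q hq hpq' hpq)
  have h1 := hqA p hp q hq hpq
  have h1' := hqA p' hp' q' hq' hpq'
  have hau : a ≠ u0 := by
    intro hau
    have := h.single hau.symm
    rw [this, Finset.mem_singleton] at h1 h1'
    exact hne (h1'.trans h1.symm)
  obtain ⟨P, Q, hP, hQ, hPQ, ⟨k1, k2⟩ | ⟨k1, k2⟩⟩ := two h.cA h.ch hau h.aA h.uA h1 h1' hne.symm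
  · exact assembleII h hL hx hP hQ hPQ hT k1 hpq.symm (hg p hp p' hp' hpp) hpq' k2 hp0 hxy hR h5 hm
  · exact assembleII h hL hx hP hQ hPQ hT k1 hpq'.symm (hg p' hp' p hp hpp.symm) hpq k2 hp0 hxy hR h5 hm

theorem core {c : V → Bool} (hc : ∀ u v, G.Adj u v → c u ≠ c v) {e : ℕ} (he : 2 ≤ e)
    {S A0 W0 B : Finset V} {u0 a b z : V} (hS : TC G S) (h : Cfg G S A0 W0 B u0 a b)
    (hp0 : ∀ x ∈ W0, LP G (insert u0 W0) (2 ^ e - 2) u0 x)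
    (hone : ∀ x ∈ W0, (∀ w ∈ W0, ∀ v ∈ B, G.Adj w v → w = x) →
      LP G (insert u0 W0) (2 ^ (e + 1) - 2) u0 x)
    (hB : ∀ v ∈ B, v ≠ b → e ≤ dg G B v)
    (hdS : ∀ v ∈ B, v ≠ b → v ≠ z → e + 1 ≤ dg G S v)
    (hz : z = b ∨ 3 ≤ e) (IHe : PP G e)
    (IHs : ∀ T : Finset V, T.card < S.card → 4 ≤ T.card → TC G T → PS G (e + 1) T) :
    LP G S (2 ^ (e + 1) - 2) a b := by
  have D1 := Finset.disjoint_left.1 h.d1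
  have D2 := Finset.disjoint_left.1 h.d2
  have D3 := Finset.disjoint_left.1 h.d3
  have heq := h.eq
  obtain ⟨x1, hx1, y1, hy1, ha1⟩ : ∃ x ∈ W0, ∃ y ∈ B, G.Adj x y := by
    obtain ⟨w, hw⟩ := h.ne
    obtain ⟨p, q, h1, h2, h3, h4, h5, h6⟩ := (hS u0 w
      (Finset.mem_erase.2 ⟨fun h' => D1 h.uA (h' ▸ hw), by simp [heq, hw]⟩) b
      (Finset.mem_erase.2 ⟨fun h' => D2 h.uA (h' ▸ h.bB), by simp [heq, h.bB]⟩)).exit W0 hw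
        (fun h' => D3 h' h.bB)
    refine ⟨p, h2, q, ?_, h4⟩
    simp only [Finset.mem_erase, heq, Finset.mem_union] at h5
    rcases h5.2 with (h7 | h7) | h7
    · exact absurd (h.nb p h2 q h7 h4) h5.1
    · exact absurd h7 h6
    · exact h7
  by_cases hall : ∀ w ∈ W0, ∀ v ∈ B, G.Adj w v → w = x1
  · have hA := (h.cA a h.aA u0 h.uA).LP
    refine ((hA.glue (hone x1 hx1 hall) ?_).join ha1 (h.cB y1 hy1 b h.bB).LP ?_).mono ?_ (by omega)
    · intro v hv hv'
      rcases Finset.mem_insert.1 hv' with h' | h'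
      · exact h'
      · exact absurd h' (D1 hv)
    · rw [Finset.disjoint_left]; intro v hv hv'
      have := h.uA
      simp only [Finset.mem_union, Finset.mem_insert] at hv
      grind
    · intro v hv
      have := h.uA
      rw [heq]
      simp only [Finset.mem_union, Finset.mem_insert] at hv ⊢
      grind
  push Not at hall
  obtain ⟨x2, hx2, y2, hy2, ha2, hne⟩ := hall
  have hyne : y1 ≠ y2 := by
    rintro rfl
    exact hne (h.one y1 hy1 x2 (by simp [hx2]) x1 (by simp [hx1]) ha2.symm ha1.symm)
  obtain ⟨W1, u1, hL, hcase⟩ := leafL h.cB h.bB hy1 hy2 hyne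
  by_cases hadj : ∃ x ∈ W0, ∃ y ∈ W1, G.Adj x y
  · obtain ⟨x, hx, y, hy, hxy⟩ := hadj
    exact caseI hc he hS h hL hp0 hB hdS hz IHe hx hy hxy
  push Not at hadj
  rcases hcase with (h' | h') | ⟨y, hy, hr⟩
  · exact absurd ha1 (hadj x1 hx1 y1 h')
  · exact absurd ha2 (hadj x2 hx2 y2 h')
  obtain ⟨x, hx, hxy⟩ : ∃ x ∈ W0, G.Adj x y := by
    rcases hy with rfl | rfl
    · exact ⟨x1, hx1, ha1⟩
    · exact ⟨x2, hx2, ha2⟩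
  have hne : ∀ v ∈ W1, v ≠ b := fun v hv h => hL.1.rW (h ▸ hv)
  have hdW : ∀ v ∈ W1, e ≤ dg G B v := fun v hv => hB v (hL.1.sub hv) (hne v hv)
  obtain ⟨w, hw⟩ := hL.1.ne
  have h2 : ∃ v ∈ W1, 2 ≤ dg G B v := ⟨w, hw, he.trans (hdW w hw)⟩
  obtain ⟨f, hf, hf2, hf3⟩ := two_pow_facts he
  refine caseII hc hS h hL hadj (fun v hv hvz => hdS v (hL.1.sub hv) (hne v hv) hvz) h2 IHs hx
    (hp0 x hx) hxy (T := insert u1 W1) subset_rfl (g := 2 ^ e - 2) ?_ subset_rfl hr.LP (by omega)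
  intro p hp p' hp' hpp
  exact hL.path hc h.cB h.bB (IHe _) (z := u1) (by simp [hp]) (by simp [hp']) hpp (.inr (.inr rfl))
    (fun v hv _ _ _ => hdW v hv) h2

end HC
set_option linter.unusedSectionVars false
set_option linter.unusedVariables false
namespace HC
variable {V : Type*} [DecidableEq V] {G : SimpleGraph V}

theorem leafZ {A : Finset V} (hA : Conn G A) {a z : V} (ha : a ∈ A) (hz : z ∈ A)
    (hex : ∃ v ∈ A, v ≠ a) :
    ∃ W u, Leaf G A W u a ∧ (z ∈ W ∨ z ∈ canon G (A \ W) a u) := by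
  classical
  by_cases hza : z = a
  · subst hza
    obtain ⟨v, hv, hne⟩ := hex
    obtain ⟨W, u, -, hL⟩ := (sep_erase (G := G) ha hv hne).leaf
    exact ⟨W, u, hL, .inr (canon_a (by simp [ha, hL.1.rW]))⟩
  have hex : ∃ k X u, Sep G A X u a ∧ z ∈ X ∧ X.card = k :=
    ⟨_, _, _, sep_erase ha hz hza, by simp [*], rfl⟩
  obtain ⟨X, u, hX, hzX, hk⟩ := Nat.find_spec hex
  have hmin : ∀ X' u', Sep G A X' u' a → z ∈ X' → X.card ≤ X'.card := by
    intro X' u' h1 h2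
    rw [hk]
    exact Nat.find_min' hex ⟨X', u', h1, h2, rfl⟩
  obtain ⟨W, v, hWX, hL⟩ := hX.leaf
  refine ⟨W, v, hL, ?_⟩
  by_cases hzW : z ∈ W
  · exact .inl hzW
  right
  have hcl : ∀ x ∈ A, x ∉ W → x ≠ v → ∀ y ∈ A, G.Adj x y → y ∉ W := by
    intro x hx hxW hxv y hy ha hyW
    rcases hL.1.cl y hyW x hx ha.symm with h | h
    · exact hxW h
    · exact hxv h
  have hru : Reach G (X \ W) z v := by
    by_contra hc
    have hCs : comp G (X \ W) z ⊆ X \ W := fun w hw => (mem_comp.1 hw).right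
    have hCX : comp G (X \ W) z ⊆ X := hCs.trans Finset.sdiff_subset
    have hS : Sep G A (comp G (X \ W) z) u a := by
      refine ⟨⟨z, mem_comp.2 (.refl (by simp [*]))⟩, hCX.trans hX.sub, fun h => hX.rW (hCX h), hX.uB,
        fun h => hX.uW (hCX h), ?_⟩
      intro w hw y hy hadj
      rcases hX.cl w (hCX hw) y hy hadj with h | h
      · refine .inl (mem_comp.2 ((mem_comp.1 hw).tail hadj (Finset.mem_sdiff.2 ⟨h, ?_⟩)))
        refine hcl w (hX.sub (hCX hw)) (Finset.mem_sdiff.1 (hCs hw)).2 ?_ y hy hadj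
        rintro rfl
        exact hc (mem_comp.1 hw)
      · exact .inr h
    have h1 := hmin _ _ hS (mem_comp.2 (.refl (by simp [*])))
    have h2 := Finset.card_lt_card (Finset.sdiff_ssubset hWX hL.1.ne)
    have h3 := Finset.card_le_card hCs
    omega
  refine mem_canon.2 ⟨by simp [*], fun s hsz => ?_⟩
  by_contra hc
  push Not at hc
  obtain ⟨hc1, hc2⟩ := hc
  by_cases hsX : s ∈ X
  · have hCs : comp G ((A \ W).erase s) z ⊆ (A \ W).erase s := fun w hw => (mem_comp.1 hw).right
    have hzH : z ∈ (A \ W).erase s := by simp [*]; exact hsz.symm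
    have hS : Sep G A (comp G ((A \ W).erase s) z) s a := by
      refine ⟨⟨z, mem_comp.2 (.refl hzH)⟩, fun w hw => ?_, fun h => hc1 (mem_comp.1 h),
        hX.sub hsX, fun h => ?_, ?_⟩
      · have := hCs hw; simp at this; exact this.2.1
      · have := hCs h; simp at this
      · intro w hw y hy hadj
        by_cases hys : y = s
        · exact .inr hys
        have hwH := hCs hw
        simp only [Finset.mem_erase, Finset.mem_sdiff] at hwH
        refine .inl (mem_comp.2 ((mem_comp.1 hw).tail hadj (Finset.mem_erase.2 ⟨hys,
          Finset.mem_sdiff.2 ⟨hy, hcl w hwH.2.1 hwH.2.2 ?_ y hy hadj⟩⟩)))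
        rintro rfl
        exact hc2 (mem_comp.1 hw)
    have h1 := hmin _ _ hS (mem_comp.2 (.refl hzH))
    have hsub : A \ X ⊆ (A \ W).erase s := by
      intro w hw
      simp only [Finset.mem_erase, Finset.mem_sdiff] at hw ⊢
      exact ⟨fun h => hw.2 (h ▸ hsX), hw.1, fun h => hw.2 (hWX h)⟩
    have hCX : comp G ((A \ W).erase s) z ⊂ X := by
      refine Finset.ssubset_iff_subset_ne.2 ⟨?_, ?_⟩
      · intro w hw
        refine ((mem_comp.1 hw).closed (fun w => w ∈ X ∧ Reach G ((A \ W).erase s) z w) ?_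
          ⟨hzX, .refl hzH⟩).1
        rintro p ⟨hp, hpr⟩ hpS q hq hadj
        refine ⟨?_, hpr.tail hadj hq⟩
        rcases hX.cl p hp q (by simp at hq; tauto) hadj with h | rfl
        · exact h
        exfalso
        exact hc1 ((hpr.tail hadj hq).trans ((hX.toU hA ha hX.rW).symm.mono hsub))
      · intro he
        rw [← he] at hsX
        have := hCs hsX
        simp at this
    have := Finset.card_lt_card hCX
    omega
  · refine hc2 (hru.mono ?_)
    intro w hw
    simp only [Finset.mem_erase, Finset.mem_sdiff] at hw ⊢
    exact ⟨fun h => hsX (h ▸ hw.1), hX.sub hw.1, hw.2⟩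

theorem config {c : V → Bool} (hc : ∀ u v, G.Adj u v → c u ≠ c v) {e : ℕ} (he : 2 ≤ e)
    {S A B : Finset V} {a b z1 z2 : V} (hS : TC G S) (hd : Disjoint A B)
    (hSe : S = A ∪ B) (hA : Conn G A) (hB : Conn G B) (ha : a ∈ A) (hb : b ∈ B)
    (hone : ∀ v ∈ B, ∀ w ∈ A, ∀ w' ∈ A, G.Adj v w → G.Adj v w' → w = w')
    (hex : ∃ v ∈ A, v ≠ a) (hz1 : z1 ∈ A) (hz2 : z2 ∈ B)
    (hdA : ∀ v ∈ A, v ≠ a → v ≠ z1 → e ≤ dg G A v) (hdz : z1 ≠ a → 2 ≤ dg G A z1)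
    (hdB : ∀ v ∈ B, v ≠ b → e ≤ dg G B v)
    (hdS : ∀ v ∈ S, v ≠ a → v ≠ b → v ≠ z1 → v ≠ z2 → e + 1 ≤ dg G S v)
    (hz : z2 = b ∨ 3 ≤ e) (IHe : PP G e)
    (IHs : ∀ T : Finset V, T.card < S.card → 4 ≤ T.card → TC G T → PS G (e + 1) T) :
    LP G S (2 ^ (e + 1) - 2) a b := by
  obtain ⟨W0, u0, hL, hzc⟩ := leafZ hA ha hz1 hex
  obtain ⟨B', hBB, h⟩ := cfg_canon hS hd hSe hA hB ha hb hone hL.1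
  have hdl := Finset.disjoint_left.1 hd
  have D1 := Finset.disjoint_left.1 h.d1
  have D2 := Finset.disjoint_left.1 h.d2
  have D3 := Finset.disjoint_left.1 h.d3
  have hne : ∀ v ∈ W0, v ≠ a := fun v hv h => hL.1.rW (h ▸ hv)
  have h2 : ∃ v ∈ W0, 2 ≤ dg G A v := by
    obtain ⟨w, hw⟩ := hL.1.ne
    refine ⟨w, hw, ?_⟩
    by_cases hwz : w = z1
    · rw [hwz]; exact hdz (hwz ▸ hne w hw)
    · exact he.trans (hdA w (hL.1.sub hw) (hne w hw) hwz)
  have hux : ∀ x ∈ W0, u0 ≠ x := fun x hx h => hL.1.uW (h ▸ hx)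
  have hz1B : z1 ∉ B' := by
    rcases hzc with h' | h'
    · exact D3 h'
    · exact D2 h'
  have hB'S : B' ⊆ S := by rw [h.eq]; exact Finset.subset_union_right
  have haB : ∀ v ∈ B', v ≠ a := fun v hv h' => D2 h.aA (h' ▸ hv)
  have hdS' : ∀ v ∈ B', v ≠ b → v ≠ z2 → e + 1 ≤ dg G S v := fun v hv h1 h3 =>
    hdS v (hB'S hv) (haB v hv) h1 (fun h' => hz1B (h' ▸ hv)) h3
  refine core hc he hS h (z := z2) ?_ ?_ ?_ hdS' hz IHe IHs
  · intro x hx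
    exact hL.path hc hA ha (IHe _) (z := z1) (by simp) (by simp [hx]) (hux x hx) (.inl rfl)
      (fun v hv _ _ h3 => hdA v (hL.1.sub hv) (hne v hv) h3) h2
  · intro x hx hxo
    have hlt : (insert u0 W0).card < S.card := by
      apply Finset.card_lt_card
      have hsA : insert u0 W0 ⊆ A := by
        intro v hv
        rcases Finset.mem_insert.1 hv with rfl | h'
        · exact hL.1.uB
        · exact hL.1.sub h'
      refine Finset.ssubset_iff_subset_ne.2 ⟨?_, ?_⟩
      · rw [hSe]; exact hsA.trans Finset.subset_union_left
      · intro he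
        have : b ∈ S := by simp [hSe, hb]
        rw [← he] at this
        exact hdl (hsA this) hb
    refine hL.path hc hA ha (IHs _ hlt) (z := z1) (by simp) (by simp [hx]) (hux x hx) (.inl rfl) ?_ h2
    intro v hv _ h3 h4
    have hvA := hL.1.sub hv
    refine (hdS v (by simp [hSe, hvA]) (hne v hv) (fun h' => hdl hvA (h' ▸ hb)) h4
      (fun h' => hdl hvA (h' ▸ hz2))).trans (dg_le ?_)
    intro w hw hadj
    rw [hSe, Finset.mem_union] at hw
    rcases hw with hw | hw
    · exact hw
    · exact absurd (hxo v hv w (hBB hw) hadj) h3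
  · intro v hv hvb
    by_cases hvB : v ∈ B
    · exact (hdB v hvB hvb).trans (dg_le fun w hw _ => hBB hw)
    · have h1 := hdS' v hv hvb (fun h' => hvB (h' ▸ hz2))
      have h3 : dg G S v ≤ dg G B' v + 1 := by
        apply dg_le1
        intro w hw w' hw' h4 h5 h6 h7
        rw [h.eq, Finset.mem_union] at hw hw'
        exact h.one v hv w (by tauto) w' (by tauto) h4 h5
      omega

end HC
set_option linter.unusedSectionVars false
set_option linter.unusedVariables false
namespace HC
variable {V : Type*} [DecidableEq V] {G : SimpleGraph V}

theorem dg_erase {S : Finset V} {v z : V} : dg G S v ≤ dg G (S.erase z) v + 1 := by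
  apply dg_le1
  intro w hw w' hw' _ _ h1 h2
  simp [hw] at h1
  simp [hw'] at h2
  rw [h1, h2]

theorem dg_erase' {S : Finset V} {v z : V} (h : ¬ G.Adj v z) : dg G S v ≤ dg G (S.erase z) v := by
  apply dg_le
  intro w hw ha
  simp [hw]
  rintro rfl
  exact h ha

theorem lemR_aux {c : V → Bool} (hc : ∀ u v, G.Adj u v → c u ≠ c v) {d : ℕ} (hd : 3 ≤ d)
    {S W : Finset V} {a b z p q u : V} (hS : TC G S) (ha : a ∈ S) (hb : b ∈ S)
    (hab : a ≠ b) (hz : z ∈ S) (hza : z ≠ a) (hzb : z ≠ b)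
    (hL : Leaf G (S.erase z) W u b) (hp : p ∈ W) (hq : q ∈ S.erase z) (hqW : q ∉ insert u W)
    (hzp : G.Adj z p) (hzq : G.Adj z q) (hzz : ∀ w ∈ S, G.Adj z w → w = p ∨ w = q)
    (hdeg : ∀ v ∈ S, v ≠ a → v ≠ b → v ≠ z → d ≤ dg G S v)
    (IHs : ∀ T : Finset V, T.card < S.card → 4 ≤ T.card → TC G T → PS G d T) :
    LP G S (2 ^ d - 2) a b := by
  have hC := hS z
  have hbS : b ∈ S.erase z := by simp [hb, hzb.symm]
  have haS : a ∈ S.erase z := by simp [ha, hza.symm]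
  have hzW : z ∉ W := fun h => by have := hL.1.sub h; simp at this
  have huS := Finset.mem_erase.1 hL.1.uB
  have huW := hL.1.uW
  have hWS : ∀ v ∈ W, v ∈ S ∧ v ≠ z ∧ v ≠ b := fun v hv => by
    have := Finset.mem_erase.1 (hL.1.sub hv)
    exact ⟨this.2, this.1, fun h => hL.1.rW (h ▸ hv)⟩
  have hTS : insert u W ⊆ S.erase z := by
    intro v hv
    rcases Finset.mem_insert.1 hv with rfl | h'
    · exact hL.1.uB
    · exact hL.1.sub h'
  have hlt : (insert u W).card < S.card :=
    (Finset.card_le_card hTS).trans_lt (Finset.card_lt_card (Finset.erase_ssubset hz))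
  have hqu : q ≠ u := fun h => hqW (by simp [h])
  have hqW' : q ∉ W := fun h => hqW (by simp [h])
  have hub := (hL.1.toU hC hbS hL.1.rW).symm.LP
  have hnz : ∀ v ∈ W, v ≠ p → ¬ G.Adj v z := by
    intro v hv hvp hadj
    rcases hzz v (hWS v hv).1 hadj.symm with h | h
    · exact hvp h
    · exact hqW' (h ▸ hv)
  have hdW : ∀ v ∈ W, v ≠ a → v ≠ p → d ≤ dg G (S.erase z) v := by
    intro v hv h1 h2
    have h3 := hWS v hv
    exact (hdeg v h3.1 h1 h3.2.2 h3.2.1).trans (dg_erase' (hnz v hv h2))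
  have hd2 : ∀ v ∈ W, v ≠ a → 2 ≤ dg G (S.erase z) v := by
    intro v hv h1
    have h3 := hWS v hv
    have h4 := hdeg v h3.1 h1 h3.2.2 h3.2.1
    have h5 := dg_erase (G := G) (S := S) (v := v) (z := z)
    omega
  by_cases haW : a ∈ W
  · by_cases hone : ∃ v ∈ W, v ≠ a
    · obtain ⟨v, hv, hva⟩ := hone
      have hm := hL.path hc hC hbS (IHs _ hlt) (x := a) (y := u) (z := p) (by simp [haW]) (by simp)
        (fun h => huW (h ▸ haW)) (.inr (.inl rfl)) (fun v hv h1 _ h3 => hdW v hv h1 h3)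
        ⟨v, hv, hd2 v hv hva⟩
      refine (hm.glue hub ?_).mono ?_ (by omega)
      · intro v hv hv'
        simp only [Finset.mem_insert, Finset.mem_sdiff] at hv hv'
        tauto
      · intro v hv
        rcases Finset.mem_union.1 hv with h | h
        · exact Finset.mem_of_mem_erase (hTS h)
        · exact Finset.mem_of_mem_erase (Finset.mem_sdiff.1 h).1
    · push Not at hone
      have hpa := hone p hp
      subst hpa
      have hWe : W = {p} := by
        ext v; rw [Finset.mem_singleton]
        exact ⟨hone v, fun h => h ▸ haW⟩
      obtain ⟨w, hw, hpu⟩ := hL.1.adj hC hbS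
      obtain rfl := hone w hw
      have hC2 := hL.1.conn hC
      have hb2 : b ∈ S.erase z \ W := by simp [hb, hzb.symm, hL.1.rW]
      have hu2 : u ∈ S.erase z \ W := Finset.mem_sdiff.2 ⟨hL.1.uB, huW⟩
      have hq2 : q ∈ S.erase z \ W := Finset.mem_sdiff.2 ⟨hq, hqW'⟩
      obtain ⟨y, hy, hyb⟩ : ∃ y ∈ S.erase z \ W, y ≠ b := by
        by_cases h : u = b
        · exact ⟨q, hq2, h ▸ hqu⟩
        · exact ⟨u, hu2, h⟩
      obtain ⟨W', u', -, hL'⟩ := (sep_erase (G := G) hb2 hy hyb).leaf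
      have hsub' : ∀ v ∈ insert u' W', v ∈ S ∧ v ≠ z ∧ v ≠ w := by
        intro v hv
        have : v ∈ S.erase z \ W := by
          rcases Finset.mem_insert.1 hv with rfl | h'
          · exact hL'.1.uB
          · exact hL'.1.sub h'
        simp [hWe] at this
        tauto
      have hlt' : (insert u' W').card < S.card := by
        apply Finset.card_lt_card
        refine Finset.ssubset_iff_subset_ne.2 ⟨fun v hv => (hsub' v hv).1, fun he => ?_⟩
        have := hsub' z (by rw [he]; exact hz)
        exact this.2.1 rfl
      have hau : ∀ v ∈ S.erase z \ W, G.Adj v w → v = u := by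
        intro v hv hadj
        have := Finset.mem_sdiff.1 hv
        rcases hL.1.cl w haW v this.1 hadj.symm with h | h
        · exact absurd h this.2
        · exact h
      have hazq : ∀ v ∈ S.erase z \ W, G.Adj v z → v = q := by
        intro v hv hadj
        simp [hWe] at hv
        rcases hzz v hv.1.2 hadj.symm with h | h
        · exact absurd h hv.2
        · exact h
      have hdeg' : ∀ v ∈ W', v ≠ u → v ≠ q → d ≤ dg G (S.erase z \ W) v := by
        intro v hv h1 h2
        have h3 := hsub' v (by simp [hv])
        refine (hdeg v h3.1 h3.2.2 (fun h => hL'.1.rW (h ▸ hv)) h3.2.1).trans (dg_le ?_)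
        intro x hx hadj
        simp [hWe, hx]
        refine ⟨?_, ?_⟩
        · rintro rfl; exact h2 (hazq v (hL'.1.sub hv) hadj)
        · rintro rfl; exact h1 (hau v (hL'.1.sub hv) hadj)
      have h2' : ∃ v ∈ W', 2 ≤ dg G (S.erase z \ W) v := by
        obtain ⟨v, hv⟩ := hL'.1.ne
        refine ⟨v, hv, ?_⟩
        have h3 := hsub' v (by simp [hv])
        have h4 := hdeg v h3.1 h3.2.2 (fun h => hL'.1.rW (h ▸ hv)) h3.2.1
        have h5 : dg G S v ≤ dg G (S.erase z \ W) v + 1 := by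
          apply dg_le1
          intro x hx x' hx' hadj hadj' h6 h7
          simp [hWe, hx] at h6
          simp [hWe, hx'] at h7
          have k1 := hau v (hL'.1.sub hv)
          have k2 := hazq v (hL'.1.sub hv)
          by_cases hxz : x = z <;> by_cases hxz' : x' = z
          · rw [hxz, hxz']
          · exact absurd ((k2 (hxz ▸ hadj)).symm.trans (k1 (h7 hxz' ▸ hadj'))) hqu
          · exact absurd ((k2 (hxz' ▸ hadj')).symm.trans (k1 (h6 hxz ▸ hadj))) hqu
          · rw [h6 hxz, h7 hxz']
        omega
      have hub' := (hL'.1.toU hC2 hb2 hL'.1.rW).symm.LP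
      have hin : u ∈ W' ∨ q ∈ W' := by
        obtain ⟨v, hv⟩ := hL'.1.ne
        have hvv := hsub' v (by simp [hv])
        have huu := hsub' u' (by simp)
        obtain ⟨x, y, h1, h2, h3, h4, h5, h6⟩ := (hS u' v
          (Finset.mem_erase.2 ⟨fun h' => hL'.1.uW (h' ▸ hv), hvv.1⟩) w
          (Finset.mem_erase.2 ⟨huu.2.2.symm, ha⟩)).exit W' hv
          (fun h' => (hsub' w (by simp [h'])).2.2 rfl)
        have hx2 := hL'.1.sub h2
        by_cases hyw : y = w
        · subst hyw
          exact .inl (hau x hx2 h4 ▸ h2)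
        by_cases hyz : y = z
        · subst hyz
          exact .inr (hazq x hx2 h4 ▸ h2)
        exfalso
        simp at h5
        rcases hL'.1.cl x h2 y (by simp [hWe, *]) h4 with h | h
        · exact h6 h
        · exact h5.1 h
      have hsubT : ∀ v ∈ (insert u' W') ∪ ((S.erase z \ W) \ W'), v ∈ S ∧ v ≠ z ∧ v ≠ w := by
        intro v hv
        rcases Finset.mem_union.1 hv with h | h
        · exact hsub' v h
        · simp [hWe] at h; tauto
      rcases hin with hin | hin
      · have hm := hL'.path hc hC2 hb2 (IHs _ hlt') (x := u) (y := u') (z := q) (by simp [hin])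
          (by simp) (fun h => hL'.1.uW (h ▸ hin)) (.inr (.inl rfl))
          (fun v hv h1 _ h3 => hdeg' v hv h1 h3) h2'
        refine ((LP.refl (Finset.mem_singleton_self w)).join hpu (hm.glue hub' ?_) ?_).mono ?_ (by omega)
        · intro v hv hv'
          simp only [Finset.mem_insert, Finset.mem_sdiff] at hv hv'
          tauto
        · rw [Finset.disjoint_left]; intro v hv hv'
          exact (hsubT v hv').2.2 (Finset.mem_singleton.1 hv)
        · intro v hv
          rcases Finset.mem_union.1 hv with h | h
          · rw [Finset.mem_singleton.1 h]; exact ha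
          · exact (hsubT v h).1
      · have hm := hL'.path hc hC2 hb2 (IHs _ hlt') (x := q) (y := u') (z := u) (by simp [hin])
          (by simp) (fun h => hL'.1.uW (h ▸ hin)) (.inr (.inl rfl))
          (fun v hv h1 _ h3 => hdeg' v hv h3 h1) h2'
        refine ((LP.refl (Finset.mem_singleton_self w)).join hzp.symm
          ((LP.refl (Finset.mem_singleton_self z)).join hzq (hm.glue hub' ?_) ?_) ?_).mono ?_ (by omega)
        · intro v hv hv'
          simp only [Finset.mem_insert, Finset.mem_sdiff] at hv hv'
          tauto
        · rw [Finset.disjoint_left]; intro v hv hv'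
          exact (hsubT v hv').2.1 (Finset.mem_singleton.1 hv)
        · rw [Finset.disjoint_left]; intro v hv hv'
          rw [Finset.mem_singleton] at hv
          rcases Finset.mem_union.1 hv' with h | h
          · rw [Finset.mem_singleton] at h; exact hza (h.symm.trans hv)
          · exact (hsubT v h).2.2 hv
        · intro v hv
          rcases Finset.mem_union.1 hv with h | h
          · rw [Finset.mem_singleton.1 h]; exact ha
          rcases Finset.mem_union.1 h with h | h
          · rw [Finset.mem_singleton.1 h]; exact hz
          · exact (hsubT v h).1
  · have hne : ∀ v ∈ W, v ≠ a := fun v hv h => haW (h ▸ hv)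
    have hm := hL.path hc hC hbS (IHs _ hlt) (x := u) (y := p) (z := p) (by simp) (by simp [hp])
      (fun h => huW (h ▸ hp)) (.inl rfl) (fun v hv _ h2 _ => hdW v hv (hne v hv) h2)
      ⟨p, hp, hd2 p hp (hne p hp)⟩
    have hR := hL.1.conn hC
    have haR : a ∈ S.erase z \ W := Finset.mem_sdiff.2 ⟨haS, haW⟩
    have hbR : b ∈ S.erase z \ W := Finset.mem_sdiff.2 ⟨hbS, hL.1.rW⟩
    have huR : u ∈ S.erase z \ W := Finset.mem_sdiff.2 ⟨hL.1.uB, huW⟩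
    have hqR : q ∈ S.erase z \ W := Finset.mem_sdiff.2 ⟨hq, hqW'⟩
    have hCh : Ch G (S.erase z \ W) u q := by
      intro s v hv hvs
      by_cases hs : s ∈ S.erase z \ W
      · have hps : p ≠ s := fun h => (Finset.mem_sdiff.1 hs).2 (h ▸ hp)
        have hvS := Finset.mem_sdiff.1 hv
        obtain ⟨x, y, h1, h2, h3, h4, h5, h6⟩ := (hS s v
          (Finset.mem_erase.2 ⟨hvs, Finset.mem_of_mem_erase hvS.1⟩) p
          (Finset.mem_erase.2 ⟨hps, (hWS p hp).1⟩)).exit (S.erase z \ W) hv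
          (fun h => (Finset.mem_sdiff.1 h).2 hp)
        have h3' : Reach G ((S.erase z \ W).erase s) v x := h3.mono (by
          intro t ht; simp at ht ⊢; tauto)
        have hx := Finset.mem_sdiff.1 h2
        by_cases hyz : y = z
        · subst hyz
          rcases hzz x (Finset.mem_of_mem_erase hx.1) h4.symm with h | h
          · exact absurd hp (h ▸ hx.2)
          · exact .inr (h ▸ h3')
        · have hyW : y ∈ W := by simp at h5 h6; tauto
          rcases hL.1.cl y hyW x hx.1 h4.symm with h | h
          · exact absurd h hx.2
          · exact .inl (h ▸ h3')
      · rw [Finset.erase_eq_of_notMem hs]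
        exact .inl (hR v hv u huR)
    have hRS : ∀ v ∈ S.erase z \ W, v ∈ S ∧ v ≠ z ∧ v ∉ W := by
      intro v hv; simp at hv; tauto
    obtain ⟨P, Q, hP, hQ, hPQ, hcase⟩ := two hR hCh hqu.symm huR hqR haR hbR hab
    have D := Finset.disjoint_left.1 hPQ
    have huP : u ∈ P := by
      rcases hcase with ⟨⟨l, hl, hlP, -⟩, -⟩ | ⟨⟨l, hl, hlP, -⟩, -⟩ <;> exact hlP _ hl.mem_left
    have hzs := LP.refl (G := G) (Finset.mem_singleton_self z)
    have e1 : ∀ v ∈ P, v ∈ insert u W → v = u := by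
      intro v hv hv'
      rcases Finset.mem_insert.1 hv' with h | h
      · exact h
      · exact absurd h (hRS v (hP hv)).2.2
    have e2 : ∀ v ∈ P ∪ insert u W, v ∈ S ∧ v ≠ z ∧ v ∉ Q := by
      intro v hv
      rw [Finset.mem_union, Finset.mem_insert] at hv
      rcases hv with h | rfl | h
      · exact ⟨(hRS v (hP h)).1, (hRS v (hP h)).2.1, D h⟩
      · exact ⟨huS.2, huS.1, D huP⟩
      · exact ⟨(hWS v h).1, (hWS v h).2.1, fun h' => (hRS v (hQ h')).2.2 h⟩
    have e3 : Disjoint {z} Q := by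
      rw [Finset.disjoint_left]; intro v hv hv'
      exact (hRS v (hQ hv')).2.1 (Finset.mem_singleton.1 hv)
    have e4 : Disjoint (P ∪ insert u W) ({z} ∪ Q) := by
      rw [Finset.disjoint_left]; intro v hv hv'
      have := e2 v hv
      rw [Finset.mem_union, Finset.mem_singleton] at hv'
      tauto
    have e5 : (P ∪ insert u W) ∪ ({z} ∪ Q) ⊆ S := by
      intro v hv
      rcases Finset.mem_union.1 hv with h | h
      · exact (e2 v h).1
      · rcases Finset.mem_union.1 h with h | h
        · rw [Finset.mem_singleton.1 h]; exact hz
        · exact (hRS v (hQ h)).1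
    rcases hcase with ⟨h1, h2⟩ | ⟨h1, h2⟩
    · exact ((h1.symm.glue hm e1).join hzp.symm (hzs.join hzq h2.symm e3) e4).mono e5 (by omega)
    · exact ((h1.symm.glue hm e1).join hzp.symm (hzs.join hzq h2.symm e3) e4).symm.mono e5 (by omega)

theorem lemR {c : V → Bool} (hc : ∀ u v, G.Adj u v → c u ≠ c v) {d : ℕ} (hd : 3 ≤ d)
    {S : Finset V} {a b z y1 y2 : V} (hS : TC G S) (h4 : 4 ≤ S.card) (ha : a ∈ S) (hb : b ∈ S)
    (hab : a ≠ b) (hz : z ∈ S) (hza : z ≠ a) (hzb : z ≠ b)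
    (hzz : ∀ w ∈ S, G.Adj z w → w = y1 ∨ w = y2)
    (hdeg : ∀ v ∈ S, v ≠ a → v ≠ b → v ≠ z → d ≤ dg G S v)
    (IHs : ∀ T : Finset V, T.card < S.card → 4 ≤ T.card → TC G T → PS G d T) :
    LP G S (2 ^ d - 2) a b ∨ (TC G (S.erase z) ∧ y1 ≠ a ∧ y1 ≠ b ∧ y2 ≠ a ∧ y2 ≠ b) := by
  have hC := hS z
  have hbS : b ∈ S.erase z := by simp [hb, hzb.symm]
  have haS : a ∈ S.erase z := by simp [ha, hza.symm]
  by_cases htc : TC G (S.erase z)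
  · by_cases hy : ∃ y, ∀ v, v ≠ a → v ≠ b → v ≠ y → v ≠ y1 ∧ v ≠ y2
    · obtain ⟨y, hy⟩ := hy
      left
      have hcard := Finset.card_erase_of_mem hz
      refine (IHs (S.erase z) (by omega) (htc.four hc (by omega)) htc a haS b hbS hab y ?_).mono
        (Finset.erase_subset _ _) le_rfl
      intro v hv h1 h2 h3
      have hv' := Finset.mem_erase.1 hv
      refine (hdeg v hv'.2 h1 h2 hv'.1).trans (dg_erase' ?_)
      intro hadj
      have := hy v h1 h2 h3
      have := hzz v hv'.2 hadj.symm
      tauto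
    · right
      refine ⟨htc, ?_, ?_, ?_, ?_⟩ <;> rintro rfl <;> apply hy
      · exact ⟨y2, fun v h1 h2 h3 => ⟨h1, h3⟩⟩
      · exact ⟨y2, fun v h1 h2 h3 => ⟨h2, h3⟩⟩
      · exact ⟨y1, fun v h1 h2 h3 => ⟨h3, h1⟩⟩
      · exact ⟨y1, fun v h1 h2 h3 => ⟨h3, h2⟩⟩
  left
  obtain ⟨W, u, -, hL⟩ := (sep_erase (G := G) hbS haS hab).leaf
  have hTS : insert u W ⊆ S.erase z := by
    intro v hv
    rcases Finset.mem_insert.1 hv with rfl | h'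
    · exact hL.1.uB
    · exact hL.1.sub h'
  obtain ⟨t, htS, htT⟩ : ∃ t ∈ S.erase z, t ∉ insert u W := by
    by_contra hcon
    push Not at hcon
    have : insert u W = S.erase z := subset_antisymm hTS hcon
    exact htc (this ▸ hL.tc hC hbS)
  obtain ⟨w, hw⟩ := hL.1.ne
  have hzT : z ∉ insert u W := fun h => by have := hTS h; simp at this
  have hr : Reach G (S.erase u) w t := hS u w
    (Finset.mem_erase.2 ⟨fun h => hL.1.uW (h ▸ hw), Finset.mem_of_mem_erase (hL.1.sub hw)⟩) t
    (Finset.mem_erase.2 ⟨fun h => htT (by simp [h]), Finset.mem_of_mem_erase htS⟩)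
  obtain ⟨p, hp, hzp⟩ : ∃ p ∈ W, G.Adj z p := by
    obtain ⟨p, q, h1, h2, h3, h4, h5, h6⟩ := hr.exit W hw (fun h => htT (by simp [h]))
    refine ⟨p, h2, ?_⟩
    by_cases hqz : q = z
    · exact hqz ▸ h4.symm
    simp at h5
    rcases hL.1.cl p h2 q (by simp [*]) h4 with h | h
    · exact absurd h h6
    · exact absurd h h5.1
  obtain ⟨q, hq, hqT, hzq⟩ : ∃ q ∈ S.erase z, q ∉ insert u W ∧ G.Adj z q := by
    obtain ⟨q, r, h1, h2, h3, h4, h5, h6⟩ := hr.symm.exit (S.erase z \ insert u W)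
      (Finset.mem_sdiff.2 ⟨htS, htT⟩) (fun h => (Finset.mem_sdiff.1 h).2 (by simp [hw]))
    have h2' := Finset.mem_sdiff.1 h2
    refine ⟨q, h2'.1, h2'.2, ?_⟩
    by_cases hqz : r = z
    · exact hqz ▸ h4.symm
    simp at h5 h6
    have hrW : r ∈ W := by tauto
    rcases hL.1.cl r hrW q h2'.1 h4.symm with h | h <;> exact absurd (by simp [h]) h2'.2
  have hpq : p ≠ q := fun h => hqT (by simp [← h, hp])
  refine lemR_aux hc hd hS ha hb hab hz hza hzb hL hp hq hqT hzp hzq ?_ hdeg IHs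
  intro w hw hadj
  have k1 := hzz w hw hadj
  have k2 := hzz p (Finset.mem_of_mem_erase (hL.1.sub hp)) hzp
  have k3 := hzz q (Finset.mem_of_mem_erase hq) hzq
  rcases k2 with rfl | rfl <;> rcases k3 with rfl | rfl <;> tauto

end HC
set_option linter.unusedSectionVars false
set_option linter.unusedVariables false
namespace HC
variable {V : Type*} [DecidableEq V] {G : SimpleGraph V}

theorem through_split {H : Finset V} {a u v : V} (hC : Conn G H) (hCh : Ch G H a u)
    (ha : a ∈ H) (hu : u ∈ H) (hv : v ∈ H) (hau : a ≠ u) :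
    ∃ P Q : Finset V, P ∪ Q ⊆ H ∧ LP G P 0 a v ∧ LP G Q 0 v u ∧ ∀ x ∈ P, x ∈ Q → x = v := by
  obtain ⟨l, hl, hlH, hvl⟩ := through hC hCh ha hu v hv
  obtain ⟨l1, l2, rfl⟩ := List.append_of_mem (hvl hau)
  refine ⟨(l1 ++ [v]).toFinset, (v :: l2).toFinset, ?_, hl.left.LP (by simp; tauto), hl.right.LP (by simp), ?_⟩
  · intro x hx
    apply hlH
    simp at hx ⊢
    tauto
  · intro x hx hx'
    have hn := hl.2.1
    simp [List.nodup_append] at hn hx hx'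
    grind

theorem dg_card_le {S : Finset V} {v x y : V} (h : ∀ w ∈ S, G.Adj v w → w = x ∨ w = y) :
    dg G S v ≤ 2 := by
  classical
  refine le_trans (dg_le (S := {x, y}) ?_) ?_
  · intro w hw hvw; simpa using h w hw hvw
  · exact (Finset.card_le_card (Finset.filter_subset _ _)).trans (Finset.card_le_two)

theorem tail3 {c : V → Bool} (hc : ∀ u v, G.Adj u v → c u ≠ c v)
    (hsplit : ∀ a b : V, a ≠ b → ∃ s : V → Bool, s a ≠ s b ∧
      ∀ v w w', G.Adj v w → G.Adj v w' → s w ≠ s v → s w' ≠ s v → w = w')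
    {S A B : Finset V} {a b z y1 y2 : V} (hS : TC G S) (hd : Disjoint A B)
    (hSe : S = A ∪ B) (hA : Conn G A) (hB : Conn G B) (ha : a ∈ A) (hb : b ∈ B)
    (hone : ∀ v ∈ B, ∀ w ∈ A, ∀ w' ∈ A, G.Adj v w → G.Adj v w' → w = w')
    (hz : z ∈ A) (hza : z ≠ a) (h1 : G.Adj z y1) (hy1 : y1 ∈ A) (hy1a : y1 ≠ a)
    (hz1 : ∀ w ∈ A, G.Adj z w → w = y1)
    (h2 : G.Adj z y2) (hy2 : y2 ∈ B) (hy2b : y2 ≠ b)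
    (hz2 : ∀ w ∈ B, G.Adj z w → w = y2)
    (hdeg : ∀ v ∈ S, v ≠ a → v ≠ b → v ≠ z → 3 ≤ dg G S v)
    (IHe : PP G 2)
    (IHs : ∀ T : Finset V, T.card < S.card → 4 ≤ T.card → TC G T → PS G 3 T) :
    LP G S (2 ^ 3 - 2) a b := by
  have hsep : Sep G A {z} y1 a := by
    refine ⟨by simp, by simpa using hz, by simpa using hza.symm, hy1, by simpa using h1.ne', ?_⟩
    intro w hw v hv hwv
    simp at hw; subst hw
    exact .inr (hz1 v hv hwv)
  obtain ⟨B', hBB, h⟩ := cfg_canon hS hd hSe hA hB ha hb hone hsep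
  generalize canon G (A \ {z}) a y1 = A0 at h
  have D1 := Finset.disjoint_left.1 h.d1
  have D2 := Finset.disjoint_left.1 h.d2
  have D3 := Finset.disjoint_left.1 h.d3
  have hmem : ∀ v, v ∈ S ↔ (v ∈ A0 ∨ v = z) ∨ v ∈ B' := by
    intro v; rw [h.eq]; simp; tauto
  have hzB' : z ∉ B' := fun hh => D3 (by simp) hh
  have hdB : ∀ v ∈ B', v ≠ b → 2 ≤ dg G B' v := by
    intro v hv hvb
    have e1 := hdeg v ((hmem v).2 (.inr hv)) (fun e => D2 h.aA (e ▸ hv)) hvb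
      (fun e => hzB' (e ▸ hv))
    have e2 : dg G S v ≤ dg G B' v + 1 := by
      refine dg_le1 fun w hw w' hw' a1 a2 n1 n2 => h.one v hv w ?_ w' ?_ a1 a2
      · have := (hmem w).1 hw; simp; tauto
      · have := (hmem w').1 hw'; simp; tauto
    omega
  have hy2' := hBB hy2
  obtain ⟨W1, u1, hWs, hL⟩ := (sep_erase (G := G) h.bB hy2' hy2b).leaf
  have hWB := hL.1.sub
  have hbW := hL.1.rW
  have h22 : ∃ v ∈ W1, 2 ≤ dg G B' v := by
    obtain ⟨v, hv⟩ := hL.1.ne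
    exact ⟨v, hv, hdB v (hWB hv) (fun e => hbW (e ▸ hv))⟩
  have hzy : LP G (insert y1 {z}) 1 y1 z := by
    have := ((LP.refl (G := G) (Finset.mem_singleton_self y1)).join h1.symm
      (LP.refl (G := G) (Finset.mem_singleton_self z)) (by simpa using h1.ne'))
    exact this.mono (by intro v; simp) (by omega)
  have hzn : ∀ w ∈ S, G.Adj z w → w = y1 ∨ w = y2 := by
    intro w hw hzw
    rw [hSe] at hw
    rcases Finset.mem_union.1 hw with hw | hw
    · exact .inl (hz1 w hw hzw)
    · exact .inr (hz2 w hw hzw)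
  have hy1B : y1 ∉ B' := fun hh => D2 h.uA hh
  by_cases hyW : y2 ∈ W1
  swap
  · refine caseII (d := 3) (z := z) (x := z) (y := y2) (f := 1) (g := 1) (k := 1) (T := W1) (R := B' \ W1) hc hS h hL ?_ ?_ h22 IHs
      (by simp) hzy h2 (Finset.subset_insert _ _) ?_ (Finset.Subset.refl _) ?_ (by norm_num)
    · intro x hx y hy hxy
      simp at hx; subst hx
      rcases hzn y ((hmem y).2 (.inr (hWB hy))) hxy with rfl | rfl
      · exact hy1B (hWB hy)
      · exact hyW hy
    · intro v hv hvz
      exact hdeg v ((hmem v).2 (.inr (hWB hv))) (fun e => D2 h.aA (e ▸ hWB hv)) (fun e => hbW (e ▸ hv)) hvz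
    · intro p hp p' hp' hne
      exact ((hL.conn p hp p' hp').LP.one hne).mono (Finset.Subset.refl _) (by omega)
    · exact ((hL.1.conn h.cB y2 (by simp [*]) b (by simp [h.bB, hbW])).LP.one hy2b).mono (Finset.Subset.refl _) (by omega)
  have k0 : LP G A0 1 a y1 := ((h.cA a h.aA y1 h.uA).LP.one hy1a.symm).mono (Finset.Subset.refl _) (by omega)
  have hyu : y2 ≠ u1 := fun e => hL.1.uW (e ▸ hyW)
  have hk2 : LP G (insert u1 W1) (2 ^ 2 - 2) y2 u1 := by
    refine hL.path (z := u1) hc h.cB h.bB (fun h4 ht => IHe _ h4 ht) (by simp [hyW]) (by simp) hyu (by simp) ?_ h22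
    intro v hv _ _ _
    exact hdB v (hWB hv) (fun e => hbW (e ▸ hv))
  norm_num at hk2
  have hend : LP G (B' \ W1) 0 u1 b :=
    (hL.1.conn h.cB u1 (by simp [hL.1.uB, hL.1.uW]) b (by simp [h.bB, hbW])).LP
  have hzz : z ∈ ({z} : Finset V) := by simp
  by_cases hub : u1 = b
  swap
  · exact assembleI h hL hzz hyW h2 k0 hzy hk2 (hend.one hub) (by norm_num)
  subst hub
  by_cases hcab : c a = c u1
  · have : LP G S 5 a u1 := assembleI h hL hzz hyW h2 k0 hzy hk2 hend (by norm_num)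
    exact this.par_even hc hcab (by norm_num)
  by_cases hcy : c y2 = c u1
  swap
  · exact assembleI h hL hzz hyW h2 k0 hzy (hk2.par_odd hc hcy (by norm_num)) hend (by norm_num)
  have up : ∀ {P : Finset V} {x y : V}, LP G P 0 x y → x ≠ y → c x = c y → LP G P 2 x y := by
    intro P x y hP hxy hcc
    have := (hP.one hxy).par_even hc hcc (by norm_num)
    exact this
  have hcz := hc _ _ h2
  have hcz1 := hc _ _ h1
  have hcy1 : c y1 = c u1 := by
    revert hcz hcz1 hcy; cases c y1 <;> cases c z <;> cases c y2 <;> cases c u1 <;> simp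
  by_cases hev : ∃ v ∈ W1, v ≠ y2 ∧ c v = c u1
  · obtain ⟨v, hv, hvy, hcv⟩ := hev
    have htc := hL.tc h.cB h.bB
    have hconn : Conn G (insert u1 W1) := htc.conn (by
      rw [Finset.card_insert_of_notMem hL.1.uW]
      have : 1 < W1.card := Finset.one_lt_card.2 ⟨v, hv, y2, hyW, hvy⟩
      omega)
    have hch : Ch G (insert u1 W1) y2 u1 := by
      intro s x hx hxs
      by_cases hs : s = u1
      · left
        exact htc s x (by simp [hxs]; simpa using hx) y2 (by simp [hyW, hs, hyu])
      · right
        exact htc s x (by simp [hxs]; simpa using hx) u1 (by simp [Ne.symm hs])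
    obtain ⟨P, Q, hPQ, hP, hQ, hd'⟩ := through_split hconn hch (by simp [hyW]) (by simp)
      (show v ∈ insert u1 W1 by simp [hv]) hyu
    have hvu : v ≠ u1 := fun e => hbW (e ▸ hv)
    have := ((up hP hvy.symm (hcy.trans hcv.symm)).glue (up hQ hvu hcv) hd').mono hPQ le_rfl
    exact assembleI h hL hzz hyW h2 k0 hzy this hend (by norm_num)
  push Not at hev
  obtain ⟨t, ht, t', ht', htt, a1, a2⟩ := dg_two (hdB y2 hy2' hy2b)
  have key : ∀ t ∈ B', G.Adj y2 t → G.Adj t u1 ∧ ∃ g ∈ A0, G.Adj t g ∧ c g = c u1 := by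
    intro t ht hyt
    have hct : c t ≠ c u1 := by rw [← hcy]; exact (hc _ _ hyt).symm
    have htu : t ≠ u1 := fun e => hct (by rw [e])
    have htW : t ∈ W1 := (hL.1.cl y2 hyW t ht hyt).resolve_right htu
    have hnc : ∀ w, G.Adj t w → c w = c u1 := by
      intro w hw
      have := hc _ _ hw
      revert this hct; cases c w <;> cases c t <;> cases c u1 <;> simp
    have hnB : ∀ w ∈ B', G.Adj t w → w = y2 ∨ w = u1 := by
      intro w hw htw
      rcases hL.1.cl t htW w hw htw with hw1 | hw1
      · left; by_contra hne
        exact hev w hw1 hne (hnc w htw)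
      · exact .inr hw1
    have e3 := hdeg t ((hmem t).2 (.inr ht)) (fun e => D2 h.aA (e ▸ ht)) htu (fun e => hzB' (e ▸ ht))
    constructor
    · obtain ⟨w, hw, w', hw', hne, b1, b2⟩ := dg_two (hdB t ht htu)
      rcases hnB w hw b1 with rfl | rfl
      · rcases hnB w' hw' b2 with rfl | rfl
        · exact absurd rfl hne
        · exact b2
      · exact b1
    · by_contra hno
      push Not at hno
      have := dg_card_le (G := G) (S := S) (v := t) (x := y2) (y := u1) (by
        intro w hw htw
        rcases (hmem w).1 hw with (hw | rfl) | hw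
        · exact absurd (hnc w htw) (hno w hw htw)
        · exact absurd (hnc w htw) (by rw [← hcy]; exact hcz)
        · exact hnB w hw htw)
      omega
  obtain ⟨b1, g, hg, b2, cg⟩ := key t ht a1
  obtain ⟨b1', g', hg', b2', cg'⟩ := key t' ht' a2
  have hex : ∃ g ∈ A0, g ≠ y1 ∧ c g = c u1 := by
    by_contra hno
    push Not at hno
    have e1 : g = y1 := by by_contra hne; exact hno g hg hne cg
    have e2 : g' = y1 := by by_contra hne; exact hno g' hg' hne cg'
    subst e1; subst e2
    exact htt (K23 hsplit hyu (show y2 ≠ g' from fun e => D2 hg (e ▸ hy2')) (show u1 ≠ g' from fun e => D2 hg (e ▸ h.bB)) a1.symm b1 b2 a2.symm b1' b2')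
  obtain ⟨g, hg, hgy, cg⟩ := hex
  obtain ⟨P, Q, hPQ, hP, hQ, hd'⟩ := through_split h.cA h.ch h.aA h.uA hg hy1a.symm
  have hag : a ≠ g := fun e => hcab (e ▸ cg)
  have := ((hP.one hag).glue (up hQ hgy (cg.trans hcy1.symm)) hd').mono hPQ le_rfl
  exact assembleI h hL hzz hyW h2 this hzy hk2 hend (by norm_num)

end HC
set_option linter.unusedSectionVars false
set_option linter.unusedVariables false
namespace HC
variable {V : Type*} [DecidableEq V] {G : SimpleGraph V}

theorem mainA {c : V → Bool} (hc : ∀ u v, G.Adj u v → c u ≠ c v)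
    (hsplit : ∀ a b : V, a ≠ b → ∃ s : V → Bool, s a ≠ s b ∧
      ∀ v w w', G.Adj v w → G.Adj v w' → s w ≠ s v → s w' ≠ s v → w = w')
    {e : ℕ} (he : 2 ≤ e)
    {S A B : Finset V} {a b z : V} (hS : TC G S) (h4 : 4 ≤ S.card) (hd : Disjoint A B)
    (hSe : S = A ∪ B) (hA : Conn G A) (hB : Conn G B) (ha : a ∈ A) (hb : b ∈ B)
    (hone : ∀ v ∈ B, ∀ w ∈ A, ∀ w' ∈ A, G.Adj v w → G.Adj v w' → w = w')
    (hone' : ∀ v ∈ A, ∀ w ∈ B, ∀ w' ∈ B, G.Adj v w → G.Adj v w' → w = w')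
    (hz : z ∈ A)
    (hdeg : ∀ v ∈ S, v ≠ a → v ≠ b → v ≠ z → e + 1 ≤ dg G S v)
    (IHe : PP G e)
    (IHs : ∀ T : Finset V, T.card < S.card → 4 ≤ T.card → TC G T → PS G (e + 1) T) :
    LP G S (2 ^ (e + 1) - 2) a b := by
  have D := Finset.disjoint_left.1 hd
  have hmem : ∀ v, v ∈ S ↔ v ∈ A ∨ v ∈ B := by intro v; rw [hSe]; simp
  have hab : a ≠ b := fun e => D ha (e ▸ hb)
  have hzb : z ≠ b := fun e => D hz (e ▸ hb)
  have dA : ∀ v ∈ A, dg G S v ≤ dg G A v + 1 := by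
    intro v hv
    refine dg_le1 fun w hw w' hw' a1 a2 n1 n2 => hone' v hv w ?_ w' ?_ a1 a2
    · have := (hmem w).1 hw; tauto
    · have := (hmem w').1 hw'; tauto
  have dB : ∀ v ∈ B, dg G S v ≤ dg G B v + 1 := by
    intro v hv
    refine dg_le1 fun w hw w' hw' a1 a2 n1 n2 => hone v hv w ?_ w' ?_ a1 a2
    · have := (hmem w).1 hw; tauto
    · have := (hmem w').1 hw'; tauto
  have hdA : ∀ v ∈ A, v ≠ a → v ≠ z → e ≤ dg G A v := by
    intro v hv h1 h2
    have := hdeg v ((hmem v).2 (.inl hv)) h1 (fun e => D hv (e ▸ hb)) h2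
    have := dA v hv
    omega
  have hdB : ∀ v ∈ B, v ≠ b → e ≤ dg G B v := by
    intro v hv h1
    have := hdeg v ((hmem v).2 (.inr hv)) (fun e => D ha (e ▸ hv)) h1 (fun e => D hz (e ▸ hv))
    have := dB v hv
    omega
  have hex : ∃ v ∈ A, v ≠ a := by
    have h1 := hS.dg2 (by omega) ((hmem a).2 (.inl ha))
    have h2 := dA a ha
    obtain ⟨w, hw, haw⟩ := dg_pos (show 1 ≤ dg G A a by omega)
    exact ⟨w, hw, haw.ne'⟩
  by_cases hcase : z = a ∨ 2 ≤ dg G A z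
  · exact config hc he hS hd hSe hA hB ha hb hone hex hz hb hdA
      (fun hne => hcase.resolve_left hne) hdB (fun v hv h1 h2 h3 _ => hdeg v hv h1 h2 h3)
      (.inl rfl) IHe IHs
  push Not at hcase
  obtain ⟨hza, hzl⟩ := hcase
  have hzS := (hmem z).2 (.inl hz)
  have hz2 := hS.dg2 (by omega) hzS
  have := dA z hz
  obtain ⟨y1, hy1, h1⟩ := dg_pos (show 1 ≤ dg G A z by omega)
  have hu1 : ∀ w ∈ A, G.Adj z w → w = y1 := by
    intro w hw hzw
    by_contra hne
    have := two_le_dg hw hy1 hne hzw h1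
    omega
  have hy2e : ∃ y2 ∈ B, G.Adj z y2 := by
    by_contra hno
    push Not at hno
    have : dg G S z ≤ dg G A z := dg_le fun w hw hzw =>
      ((hmem w).1 hw).resolve_right fun hwB => hno w hwB hzw
    omega
  obtain ⟨y2, hy2, h2⟩ := hy2e
  have hu2 : ∀ w ∈ B, G.Adj z w → w = y2 := fun w hw hzw => hone' z hz w hw y2 hy2 hzw h2
  have hzz : ∀ w ∈ S, G.Adj z w → w = y1 ∨ w = y2 := by
    intro w hw hzw
    rcases (hmem w).1 hw with hw | hw
    · exact .inl (hu1 w hw hzw)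
    · exact .inr (hu2 w hw hzw)
  rcases lemR hc (d := e + 1) (by omega) hS h4 ((hmem a).2 (.inl ha)) ((hmem b).2 (.inr hb)) hab hzS hza
    hzb hzz hdeg IHs with h | ⟨htc, hy1a, hy1b, hy2a, hy2b⟩
  · exact h
  by_cases he2 : e = 2
  · subst he2
    exact tail3 hc hsplit hS hd hSe hA hB ha hb hone hz hza h1 hy1 hy1a hu1 h2 hy2 hy2b hu2 hdeg IHe IHs
  have hsep : Sep G A {z} y1 a := by
    refine ⟨by simp, by simpa using hz, by simpa using hza.symm, hy1, by simpa using h1.ne', ?_⟩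
    intro w hw v hv hwv
    simp at hw; subst hw
    exact .inr (hu1 v hv hwv)
  have hAc : Conn G (A.erase z) := by
    rw [Finset.erase_eq]; exact hsep.conn hA
  have hzB : z ∉ B := fun h => D hz h
  have hyz1 := h1.ne'
  have hcard : (S.erase z).card < S.card := Finset.card_erase_lt_of_mem hzS
  have hdz' : ∀ v ∈ A, v ≠ a → v ≠ z → v ≠ y1 → e ≤ dg G (A.erase z) v := by
    intro v hv q1 q2 q3
    have := dg_erase' (G := G) (S := A) (v := v) (z := z) (fun hh => q3 (hu1 v hv hh.symm))
    have := hdA v hv q1 q2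
    omega
  refine (config (S := S.erase z) (A := A.erase z) (B := B) (z1 := y1) (z2 := y2) hc he htc
    (hd.mono_left (Finset.erase_subset _ _)) ?_ hAc hB
    (by simp [ha, hza.symm]) hb ?_ ⟨y1, by simp [hy1, hyz1], hy1a⟩ (by simp [hy1, hyz1]) hy2 ?_ ?_ hdB ?_ (.inr (by omega)) IHe ?_).mono
    (Finset.erase_subset _ _) le_rfl
  · ext v; simp [hmem]; grind
  · intro v hv w hw w' hw'
    exact hone v hv w (Finset.mem_of_mem_erase hw) w' (Finset.mem_of_mem_erase hw')
  · intro v hv q1 q2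
    simp at hv
    exact hdz' v hv.2 q1 hv.1 q2
  · intro _
    have q1 := dg_erase (G := G) (S := A) (v := y1) (z := z)
    have q2 := hdA y1 hy1 hy1a hyz1
    omega
  · intro v hv q1 q2 q3 q4
    simp at hv
    have e1 := dg_erase' (G := G) (S := S) (v := v) (z := z) (fun hh => by
      rcases hzz v hv.2 hh.symm with rfl | rfl
      · exact q3 rfl
      · exact q4 rfl)
    have e2 := hdeg v hv.2 q1 q2 hv.1
    omega
  · intro T hT
    exact IHs T (by omega)

theorem main {c : V → Bool} (hc : ∀ u v, G.Adj u v → c u ≠ c v)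
    (hsplit : ∀ a b : V, a ≠ b → ∃ s : V → Bool, s a ≠ s b ∧
      ∀ v w w', G.Adj v w → G.Adj v w' → s w ≠ s v → s w' ≠ s v → w = w')
    (d : ℕ) : PP G d := by
  have low : ∀ d ≤ 1, PP G d := by
    intro d hd S h4 hS a ha b hb hab z _
    refine (hS.conn (by omega) a ha b hb).LP.mono (Finset.Subset.refl _) ?_
    interval_cases d <;> norm_num
  by_cases hd : d ≤ 1
  · exact low d hd
  obtain ⟨e, rfl⟩ : ∃ e, d = e + 2 := ⟨d - 2, by omega⟩
  clear hd
  induction e with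
  | zero =>
    intro S h4 hS a ha b hb hab z _
    obtain ⟨w, hw, w', hw', hne, h1, h2⟩ := dg_two (hS.dg2 (by omega) ha)
    have : ∃ w ∈ S, w ≠ b ∧ G.Adj a w := by
      by_cases hwb : w = b
      · exact ⟨w', hw', fun e => hne (hwb.trans e.symm), h2⟩
      · exact ⟨w, hw, hwb, h1⟩
    obtain ⟨w, hw, hwb, h1⟩ := this
    have h3 := (hS a w (by simp [hw, h1.ne']) b (by simp [hb, hab.symm])).LP.one hwb
    have := (LP.refl (G := G) (Finset.mem_singleton_self a)).join h1 h3 (by simp)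
    refine this.mono ?_ (by norm_num)
    intro v; simp; rintro (rfl | h)
    · exact ha
    · exact h.2
  | succ e IHe =>
    intro S
    induction hn : S.card using Nat.strong_induction_on generalizing S with
    | _ m IH =>
    intro h4 hS a ha b hb hab z hdeg
    have IHs : ∀ T : Finset V, T.card < S.card → 4 ≤ T.card → TC G T → PS G (e + 2 + 1) T := by
      intro T hT h4' hT'
      exact IH T.card (by omega) T rfl h4' hT'
    obtain ⟨z, hz, hdeg⟩ : ∃ z ∈ S, ∀ v ∈ S, v ≠ a → v ≠ b → v ≠ z → e + 2 + 1 ≤ dg G S v := by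
      by_cases hz : z ∈ S
      · exact ⟨z, hz, fun v hv q1 q2 q3 => hdeg v hv q1 q2 q3⟩
      · exact ⟨a, ha, fun v hv q1 q2 q3 => hdeg v hv q1 q2 (fun e => hz (e ▸ hv))⟩
    obtain ⟨A, B, hd, hSe, hA, hB, haA, hbB, o1, o2⟩ := partition hsplit (hS.conn (by omega)) ha hb hab
    have : z ∈ A ∨ z ∈ B := by rw [hSe] at hz; simpa using hz
    rcases this with hzA | hzB
    · exact mainA hc hsplit (by omega) hS (by omega) hd hSe hA hB haA hbB o1 o2 hzA hdeg IHe IHs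
    · exact (mainA hc hsplit (by omega) hS (by omega) hd.symm (by rw [hSe, Finset.union_comm]) hB hA hbB haA o2 o1 hzB
        (fun v hv q1 q2 q3 => hdeg v hv q2 q1 q3) IHe IHs).symm

end HC
namespace HC
variable {V : Type*} [DecidableEq V] {G : SimpleGraph V}

theorem IsP.walk {l : List V} {a b : V} (h : IsP G l a b) :
    ∃ p : G.Walk a b, p.support = l := by
  induction l generalizing a with
  | nil => simp [IsP] at h
  | cons x l ih =>
    obtain ⟨h1, h2, h3, h4⟩ := h
    simp at h3; subst h3
    cases l with
    | nil => simp at h4; subst h4; exact ⟨.nil, rfl⟩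
    | cons y l =>
      rw [List.isChain_cons_cons] at h1
      obtain ⟨p, hp⟩ := ih (a := y) ⟨h1.2, (List.nodup_cons.1 h2).2, rfl, by simpa using h4⟩
      exact ⟨.cons h1.1 p, by simp [hp]⟩

theorem tc_of [Fintype V] (h : TwoConnected G) : TC G Finset.univ := by
  intro v x hx y hy
  simp at hx hy
  have hc := (h.2 v).preconnected ⟨x, by simp [hx]⟩ ⟨y, by simp [hy]⟩
  obtain ⟨p⟩ := hc
  have key : ∀ (s t : ((⊤ : G.Subgraph).deleteVerts {v}).verts)
      (p : ((⊤ : G.Subgraph).deleteVerts {v}).coe.Walk s t),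
      Reach G (Finset.univ.erase v) s.1 t.1 := by
    intro s t p
    induction p with
    | nil => 
      rename_i u
      exact .refl (by simpa using u.2)
    | cons hadj p ih =>
      rename_i s u t
      have h1 : G.Adj s.1 u.1 := by
        have := ((⊤ : G.Subgraph).deleteVerts {v}).adj_sub hadj
        exact this
      have h2 : Reach G (Finset.univ.erase v) u.1 s.1 :=
        (Reach.refl (by simpa using u.2)).tail h1.symm (by simpa using s.2)
      exact h2.symm.trans ih
  exact key _ _ p

theorem cube_adj {n : ℕ} {x y : Fin n → Bool} (h : (hypercube n).Adj x y) :
    ∃ i, x i ≠ y i ∧ ∀ j, j ≠ i → x j = y j := by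
  have h1 : hammingDist x y = 1 := by
    simp only [hypercube, SimpleGraph.fromRel_adj] at h
    rcases h.2 with h | h
    · exact h
    · rw [hammingDist_comm]; exact h
  unfold hammingDist at h1
  obtain ⟨i, hi⟩ := Finset.card_eq_one.1 h1
  have hi' : ∀ j, x j ≠ y j ↔ j = i := by
    intro j
    have := Finset.ext_iff.1 hi j
    simpa using this
  exact ⟨i, (hi' i).2 rfl, fun j hj => by by_contra hne; exact hj ((hi' j).1 hne)⟩

theorem cube_color {n : ℕ} {x y : Fin n → Bool} (h : (hypercube n).Adj x y) :
    decide (∑ i, (if x i then (1 : ZMod 2) else 0) = 0) ≠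
      decide (∑ i, (if y i then (1 : ZMod 2) else 0) = 0) := by
  obtain ⟨i, hi, hj⟩ := cube_adj h
  rw [← Finset.add_sum_erase _ _ (Finset.mem_univ i),
    ← Finset.add_sum_erase (f := fun i => if y i then (1 : ZMod 2) else 0) _ (Finset.mem_univ i)]
  have : ∑ j ∈ Finset.univ.erase i, (if x j then (1 : ZMod 2) else 0) =
      ∑ j ∈ Finset.univ.erase i, (if y j then (1 : ZMod 2) else 0) :=
    Finset.sum_congr rfl fun j h => by rw [hj j (Finset.ne_of_mem_erase h)]
  rw [this]
  generalize ∑ j ∈ Finset.univ.erase i, (if y j then (1 : ZMod 2) else 0) = s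
  revert hi s
  cases x i <;> cases y i <;> simp <;> decide

theorem cube_split {n : ℕ} {v w w' : Fin n → Bool} (h : (hypercube n).Adj v w)
    (h' : (hypercube n).Adj v w') (i : Fin n) (h1 : w i ≠ v i) (h2 : w' i ≠ v i) : w = w' := by
  obtain ⟨j, hj, hj'⟩ := cube_adj h
  obtain ⟨k, hk, hk'⟩ := cube_adj h'
  have e1 : i = j := by by_contra hne; exact h1 (hj' i hne).symm
  have e2 : i = k := by by_contra hne; exact h2 (hk' i hne).symm
  subst e1; subst e2
  funext m
  by_cases hm : m = i
  · subst hm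
    revert h1 h2; cases w m <;> cases w' m <;> cases v m <;> simp
  · rw [← hj' m hm, ← hk' m hm]

end HC

theorem hypercube_twoConnected_path (n d : ℕ) (G : (hypercube n).Subgraph)
    (h2 : TwoConnected G.coe)
    (a b : Fin n → Bool) (ha : a ∈ G.verts) (hb : b ∈ G.verts) (hab : a ≠ b)
    (hdeg : ∀ z ∈ G.verts, z ≠ a → z ≠ b → d ≤ (G.neighborSet z).ncard) :
    ∃ p : G.coe.Walk ⟨a, ha⟩ ⟨b, hb⟩, p.IsPath ∧ 2 ^ d - 2 ≤ p.length := by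
  classical
  have : Fintype G.verts := Fintype.ofFinite _
  have hadj : ∀ u v : G.verts, G.coe.Adj u v → (hypercube n).Adj u.1 v.1 :=
    fun u v h => G.adj_sub h
  have hc : ∀ u v : G.verts, G.coe.Adj u v →
      (fun x : G.verts => decide (∑ i, (if x.1 i then (1 : ZMod 2) else 0) = 0)) u ≠
      (fun x : G.verts => decide (∑ i, (if x.1 i then (1 : ZMod 2) else 0) = 0)) v :=
    fun u v h => HC.cube_color (hadj u v h)
  have hsplit : ∀ a b : G.verts, a ≠ b → ∃ s : G.verts → Bool, s a ≠ s b ∧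
      ∀ v w w', G.coe.Adj v w → G.coe.Adj v w' → s w ≠ s v → s w' ≠ s v → w = w' := by
    intro x y hxy
    have : x.1 ≠ y.1 := fun e => hxy (Subtype.ext e)
    obtain ⟨i, hi⟩ := Function.ne_iff.1 this
    exact ⟨fun v => v.1 i, hi, fun v w w' q1 q2 q3 q4 =>
      Subtype.ext (HC.cube_split (hadj _ _ q1) (hadj _ _ q2) i q3 q4)⟩
  have htc := HC.tc_of h2
  have h3 : 3 ≤ (Finset.univ : Finset G.verts).card := by
    obtain ⟨x, y, z, h1, h2, h3⟩ := h2.1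
    exact Finset.two_lt_card.2 ⟨x, by simp, y, by simp, z, by simp, h1, h2, h3⟩
  have h4 := htc.four hc h3
  have hab' : (⟨a, ha⟩ : G.verts) ≠ ⟨b, hb⟩ := fun e => hab (congrArg Subtype.val e)
  have hdg : ∀ z : G.verts, (G.neighborSet z.1).ncard ≤ HC.dg G.coe Finset.univ z := by
    intro z
    have hsub : G.neighborSet z.1 ⊆
        (((Finset.univ.filter (G.coe.Adj z)).image Subtype.val : Finset (Fin n → Bool)) : Set _) := by
      intro w hw
      have hw' : G.Adj z.1 w := hw
      simp only [Finset.coe_image, Set.mem_image, Finset.mem_coe, Finset.mem_filter]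
      exact ⟨⟨w, hw'.snd_mem⟩, ⟨Finset.mem_univ _, hw'⟩, rfl⟩
    have h1 := Set.ncard_le_ncard hsub (Finset.finite_toSet _)
    rw [Set.ncard_coe_finset] at h1
    refine h1.trans (Finset.card_image_le.trans (le_of_eq ?_))
    unfold HC.dg
    congr
  obtain ⟨l, hl, -, hlen⟩ := HC.main hc hsplit d Finset.univ h4 htc ⟨a, ha⟩ (Finset.mem_univ _) ⟨b, hb⟩
    (Finset.mem_univ _) hab' ⟨a, ha⟩ (fun v _ q1 q2 _ =>
      (hdeg v.1 v.2 (fun e => q1 (Subtype.ext e)) (fun e => q2 (Subtype.ext e))).trans (hdg v))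
  obtain ⟨p, hp⟩ := hl.walk
  refine ⟨p, ?_, ?_⟩
  · rw [SimpleGraph.Walk.isPath_def, hp]; exact hl.2.1
  · have := p.length_support
    rw [hp] at this
    omega
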